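/- arXiv:1509.05868 — 5 statements merged into one kernel-verified Lean document; each statement's English description precedes it below -/
import Mathlib

section
/- Let A ∈ ℝ^{n×n}, B ∈ ℝ^{n×m}, C ∈ ℝ^{m×n}, D ∈ ℝ^{m×m} be such that (A,B) is reachable, (A,C) is observable, and Q(z) = C(zI−A)⁻¹B + D is all-pass. Then there exist invertible symmetric matrices P, Q ∈ ℝ^{n×n} with PQ = I such that P satisfies equations (P): A P Aᵀ − P = B Bᵀ, B Dᵀ = A P Cᵀ, D Dᵀ − C P Cᵀ = I, and Q satisfies equations (Q): Aᵀ Q A − Q = Cᵀ C, Cᵀ D = Aᵀ Q B, Dᵀ D − Bᵀ Q B = I. -/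
open Matrix

noncomputable section

/-- The pair `(A,B)` is reachable: the columns of `B, AB, …, A^{N-1}B` span the state space. -/
def Reachable {N M : Type*} [Fintype N] [DecidableEq N] [Fintype M]
    (A : Matrix N N ℝ) (B : Matrix N M ℝ) : Prop :=
  Submodule.span ℝ
    {v : N → ℝ | ∃ k < Fintype.card N, ∃ j : M, v = (A ^ k) *ᵥ (fun i => B i j)} = ⊤

/-- The pair `(A,C)` is observable: `⋂_{k<N} ker (C A^k) = {0}`. -/
def Observable {N M : Type*} [Fintype N] [DecidableEq N] [Fintype M]
    (A : Matrix N N ℝ) (C : Matrix M N ℝ) : Prop :=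
  ∀ v : N → ℝ, (∀ k < Fintype.card N, (C * A ^ k) *ᵥ v = 0) → v = 0

/-- The transfer function `z ↦ C (zI - A)⁻¹ B + D` is all-pass: for every real `z ≠ 0`
with `zI - A` and `z⁻¹I - Aᵀ` invertible,
`(C(zI−A)⁻¹B + D) (Bᵀ(z⁻¹I−Aᵀ)⁻¹Cᵀ + Dᵀ) = I`. -/
def AllPass {N M : Type*} [Fintype N] [DecidableEq N] [Fintype M] [DecidableEq M]
    (A : Matrix N N ℝ) (B : Matrix N M ℝ) (C : Matrix M N ℝ) (D : Matrix M M ℝ) : Prop :=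
  ∀ z : ℝ, z ≠ 0 → IsUnit (z • (1 : Matrix N N ℝ) - A) →
    IsUnit (z⁻¹ • (1 : Matrix N N ℝ) - Aᵀ) →
    (C * (z • (1 : Matrix N N ℝ) - A)⁻¹ * B + D) *
      (Bᵀ * (z⁻¹ • (1 : Matrix N N ℝ) - Aᵀ)⁻¹ * Cᵀ + Dᵀ) = 1

open Filter Topology

def AP_good {n : ℕ} (A : Matrix (Fin n) (Fin n) ℝ) (z : ℝ) : Prop :=
  1 < z ∧ IsUnit (z • (1 : Matrix (Fin n) (Fin n) ℝ) - A) ∧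
    IsUnit (z⁻¹ • (1 : Matrix (Fin n) (Fin n) ℝ) - A)

lemma AP_finite {n : ℕ} (A : Matrix (Fin n) (Fin n) ℝ) :
    {z : ℝ | ¬ IsUnit (z • (1 : Matrix (Fin n) (Fin n) ℝ) - A)}.Finite := by
  have h := Matrix.finite_spectrum (R := ℝ) A
  refine h.subset ?_
  intro z hz
  rw [spectrum.mem_iff, Algebra.algebraMap_eq_smul_one]
  exact hz

lemma AP_good_eventually {n : ℕ} (A : Matrix (Fin n) (Fin n) ℝ) :
    ∀ᶠ z in atTop, AP_good A z := by
  have h1 : ∀ᶠ z : ℝ in atTop, IsUnit (z • (1 : Matrix (Fin n) (Fin n) ℝ) - A) := by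
    apply atTop_le_cofinite
    exact AP_finite A
  have h2 : ∀ᶠ z : ℝ in atTop, IsUnit (z⁻¹ • (1 : Matrix (Fin n) (Fin n) ℝ) - A) := by
    apply atTop_le_cofinite
    exact (AP_finite A).preimage inv_injective.injOn
  filter_upwards [h1, h2, eventually_gt_atTop 1] with z a b c
  exact ⟨c, a, b⟩

lemma AP_res_tendsto {n : ℕ} (A : Matrix (Fin n) (Fin n) ℝ) :
    Tendsto (fun z : ℝ => (z • (1 : Matrix (Fin n) (Fin n) ℝ) - A)⁻¹) atTop (𝓝 0) := by
  letI : NormedRing (Matrix (Fin n) (Fin n) ℝ) := Matrix.linftyOpNormedRing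
  letI : NormedAlgebra ℝ (Matrix (Fin n) (Fin n) ℝ) := Matrix.linftyOpNormedAlgebra
  have h := (spectrum.resolvent_tendsto_cobounded (𝕜 := ℝ) A).mono_left
    (le_trans le_sup_right (le_of_eq (IsOrderBornology.cobounded_eq).symm))
  refine h.congr ?_
  intro z
  rw [resolvent, Algebra.algebraMap_eq_smul_one, Matrix.nonsing_inv_eq_ringInverse]

lemma AP_W {n : ℕ} {κ μ : Type*} (A : Matrix (Fin n) (Fin n) ℝ)
    (V : Matrix κ (Fin n) ℝ) (B : Matrix (Fin n) μ ℝ) (W : Matrix κ μ ℝ)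
    (h : ∀ᶠ z : ℝ in atTop, V * (z • (1 : Matrix (Fin n) (Fin n) ℝ) - A)⁻¹ * B + W = 0) :
    W = 0 := by
  have hc : Continuous fun M : Matrix (Fin n) (Fin n) ℝ => V * M * B + W := by fun_prop
  have h1 := (hc.tendsto 0).comp (AP_res_tendsto A)
  have h2 : Tendsto ((fun M : Matrix (Fin n) (Fin n) ℝ => V * M * B + W) ∘
    fun z : ℝ => (z • (1 : Matrix (Fin n) (Fin n) ℝ) - A)⁻¹) atTop (𝓝 0) :=
    tendsto_const_nhds.congr' (h.mono fun z hz => hz.symm)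
  have := tendsto_nhds_unique h1 h2
  simpa using this

lemma AP_pow {n : ℕ} {κ μ : Type*} (A : Matrix (Fin n) (Fin n) ℝ)
    (B : Matrix (Fin n) μ ℝ) (k : ℕ) : ∀ (V : Matrix κ (Fin n) ℝ) 
    (_ : ∀ᶠ z : ℝ in atTop, V * (z • (1 : Matrix (Fin n) (Fin n) ℝ) - A)⁻¹ * B = 0),
    V * A ^ k * B = 0 := by
  have key : ∀ V : Matrix κ (Fin n) ℝ, 
    (∀ᶠ z : ℝ in atTop, V * (z • (1 : Matrix (Fin n) (Fin n) ℝ) - A)⁻¹ * B = 0) →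
    ∀ᶠ z : ℝ in atTop, (V * A) * (z • (1 : Matrix (Fin n) (Fin n) ℝ) - A)⁻¹ * B + V * B = 0 := by
    intro V h
    filter_upwards [h, AP_good_eventually A] with z hz hg
    have h1 := Matrix.mul_nonsing_inv _ ((Matrix.isUnit_iff_isUnit_det _).1 hg.2.1)
    set R := (z • (1 : Matrix (Fin n) (Fin n) ℝ) - A)⁻¹
    have h2 : A * R = z • R - 1 := by
      rw [sub_mul] at h1
      rw [← h1]; simp
    rw [Matrix.mul_assoc V, h2, Matrix.mul_sub, Matrix.sub_mul, Matrix.mul_smul, Matrix.smul_mul, hz]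
    simp
  induction k with
  | zero =>
    intro V h
    simpa using AP_W A _ B _ (key V h)
  | succ k ih =>
    intro V h
    have h0 := AP_W A _ B _ (key V h)
    have := ih (V * A) ((key V h).mono fun z hz => by simpa [h0] using hz)
    rw [pow_succ']
    simpa [Matrix.mul_assoc] using this

lemma AP_reach {n m : ℕ} {κ : Type*} (A : Matrix (Fin n) (Fin n) ℝ)
    (B : Matrix (Fin n) (Fin m) ℝ) (hr : Reachable A B) (V : Matrix κ (Fin n) ℝ)
    (W : Matrix κ (Fin m) ℝ)
    (h : ∀ z : ℝ, AP_good A z → V * ((z • (1 : Matrix (Fin n) (Fin n) ℝ) - A)⁻¹ * B) + W = 0) :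
    V = 0 ∧ W = 0 := by
  have h' : ∀ᶠ z : ℝ in atTop, V * (z • (1 : Matrix (Fin n) (Fin n) ℝ) - A)⁻¹ * B + W = 0 := by
    filter_upwards [AP_good_eventually A] with z hz
    rw [Matrix.mul_assoc]; exact h z hz
  have hW := AP_W A V B W h'
  refine ⟨?_, hW⟩
  subst hW
  have hp := fun k => AP_pow A B k V (h'.mono fun z hz => by simpa using hz)
  have h1 : ∀ v : Fin n → ℝ, V *ᵥ v = 0 := by
    intro v
    have hv : v ∈ Submodule.span ℝ {v : Fin n → ℝ | ∃ k < Fintype.card (Fin n), ∃ j : Fin m,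
        v = (A ^ k) *ᵥ (fun i => B i j)} := by rw [show _ = _ from hr]; trivial
    induction hv using Submodule.span_induction with
    | mem x hx =>
      obtain ⟨k, _, j, rfl⟩ := hx
      ext i
      have := congrFun (congrFun (hp k) i) j
      rw [Matrix.mulVec_mulVec]
      exact this
    | zero => simp
    | add x y _ _ hx hy => rw [Matrix.mulVec_add, hx, hy, add_zero]
    | smul a x _ hx => rw [Matrix.mulVec_smul, hx, smul_zero]
  ext i j
  have := congrFun (h1 (Pi.single j 1)) i
  simpa using this

lemma AP_obs {n m : ℕ} (A : Matrix (Fin n) (Fin n) ℝ)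
    (C : Matrix (Fin m) (Fin n) ℝ) (ho : Observable A C) (v : Fin n → ℝ)
    (h : ∀ z : ℝ, AP_good A z → (C * (z⁻¹ • (1 : Matrix (Fin n) (Fin n) ℝ) - A)⁻¹) *ᵥ v = 0) :
    v = 0 := by
  have hadj : ∀ z : ℝ, (C * (z • (1 : Matrix (Fin n) (Fin n) ℝ) - A).adjugate) *ᵥ v = 0 := by
    intro z
    ext i
    let p : Polynomial ℝ := (((C.map Polynomial.C) * (charmatrix A).adjugate) *ᵥ
      (fun j => Polynomial.C (v j))) i
    have hp : ∀ z : ℝ, p.eval z =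
        ((C * (z • (1 : Matrix (Fin n) (Fin n) ℝ) - A).adjugate) *ᵥ v) i := by
      intro z
      have e1 : (Polynomial.evalRingHom z).mapMatrix (charmatrix A) =
          z • (1 : Matrix (Fin n) (Fin n) ℝ) - A := by
        ext a b
        by_cases hab : a = b
        · subst hab; simp [charmatrix_apply_eq]
        · simp [charmatrix_apply_ne _ _ _ hab, Matrix.one_apply_ne hab]
      have e2 := (Polynomial.evalRingHom z).map_adjugate (charmatrix A)
      rw [e1] at e2
      rw [← e2]
      simp [p, Matrix.mulVec, dotProduct, Matrix.mul_apply, Polynomial.eval_finsetSum]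
    have hp0 : p = 0 := by
      apply Polynomial.eq_zero_of_infinite_isRoot
      have hinf : {z : ℝ | AP_good A z}.Infinite := by
        intro hfin
        obtain ⟨z, hz1, hz2⟩ :=
          ((AP_good_eventually A).and (atTop_le_cofinite hfin.compl_mem_cofinite)).exists
        exact hz2 hz1
      refine (hinf.image inv_injective.injOn).mono ?_
      rintro _ ⟨z, hz, rfl⟩
      have := h z hz
      show p.eval _ = 0
      rw [hp]
      rw [Matrix.inv_def, Matrix.mul_smul, Matrix.smul_mulVec] at this
      have hu := (Matrix.isUnit_iff_isUnit_det _).1 hz.2.2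
      have hne : Ring.inverse (z⁻¹ • (1 : Matrix (Fin n) (Fin n) ℝ) - A).det ≠ 0 := by
        rw [Ring.inverse_eq_inv']
        exact inv_ne_zero hu.ne_zero
      have := (smul_eq_zero.1 this).resolve_left hne
      rw [this]; rfl
    rw [← hp, hp0]; simp
  apply ho
  intro k _
  have := AP_pow A (Matrix.replicateCol Unit v) k C (Eventually.of_forall fun z => by
    rw [Matrix.inv_def, Matrix.mul_smul, Matrix.smul_mul]
    have h0 : C * (z • (1 : Matrix (Fin n) (Fin n) ℝ) - A).adjugate * Matrix.replicateCol Unit v = 0 := by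
      ext i j
      exact congrFun (hadj z) i
    rw [h0, smul_zero])
  ext i
  exact congrFun (congrFun this i) ()

/-- a symmetric matrix from symmetric interpolation data -/
lemma AP_interp {n : ℕ} {ι : Type*} (x y : ι → Fin n → ℝ)
    (hx : ∀ v : Fin n → ℝ, (∀ i, v ⬝ᵥ x i = 0) → v = 0)
    (hs : ∀ i j, y i ⬝ᵥ x j = y j ⬝ᵥ x i) :
    ∃ Q : Matrix (Fin n) (Fin n) ℝ, Q.IsSymm ∧ ∀ i, Q *ᵥ x i = y i := by
  have hspan : Submodule.span ℝ (Set.range x) = ⊤ := by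
    by_contra hne
    obtain ⟨f, hf0, hf⟩ := Submodule.exists_le_ker_of_lt_top _ (lt_top_iff_ne_top.2 hne)
    have hfv : ∀ w, f w = (fun i => f (Pi.single i 1)) ⬝ᵥ w := by
      intro w
      conv_lhs => rw [LinearMap.pi_apply_eq_sum_univ f w]
      simp only [dotProduct, smul_eq_mul]
      refine Finset.sum_congr rfl fun i _ => ?_
      rw [mul_comm]
      congr 2
      ext j; simp [Pi.single_apply, eq_comm]
    apply hf0
    have := hx (fun i => f (Pi.single i 1)) fun i => by
      rw [← hfv]
      exact hf (Submodule.subset_span ⟨i, rfl⟩)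
    ext w
    rw [LinearMap.comp_apply, hfv, this]; simp
  have hfr : Module.finrank ℝ (Submodule.span ℝ (Set.range x)) = n := by
    rw [hspan]; simp
  obtain ⟨f, hf, hli⟩ : ∃ f : Fin n → Fin n → ℝ, (∀ i, f i ∈ Set.range x) ∧
      LinearIndependent ℝ f := by
    obtain ⟨f, hf, -, hli⟩ := Submodule.exists_fun_fin_finrank_span_eq ℝ (Set.range x)
    exact ⟨f ∘ Fin.cast hfr.symm, fun i => hf _, hli.comp _ (Fin.cast_injective _)⟩
  choose g hg using hf
  let T : Matrix (Fin n) (Fin n) ℝ := Matrix.of f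
  let Y : Matrix (Fin n) (Fin n) ℝ := Matrix.of fun k => y (g k)
  have hT : IsUnit T := Matrix.linearIndependent_rows_iff_isUnit.1 hli
  have hTd := (Matrix.isUnit_iff_isUnit_det _).1 hT
  have hTQ : T * (T⁻¹ * Y) = Y := Matrix.mul_nonsing_inv_cancel_left _ _ hTd
  have hYT : Y * Tᵀ = T * Yᵀ := by
    ext a b
    have := hs (g a) (g b)
    rw [hg, hg] at this
    rw [Matrix.mul_apply', Matrix.mul_apply']
    refine this.trans (dotProduct_comm _ _)
  refine ⟨T⁻¹ * Y, ?_, ?_⟩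
  · have hTt : IsUnit Tᵀ.det := by rwa [Matrix.det_transpose]
    have e : T * (T⁻¹ * Y)ᵀ * Tᵀ = T * (T⁻¹ * Y) * Tᵀ := by
      rw [Matrix.mul_assoc, ← Matrix.transpose_mul, hTQ, hYT]
    have e2 := congrArg (fun M => T⁻¹ * (M * (Tᵀ)⁻¹)) e
    simp only [Matrix.mul_nonsing_inv_cancel_right _ _ hTt,
      Matrix.nonsing_inv_mul_cancel_left _ _ hTd] at e2
    exact e2
  · intro i
    have : Y *ᵥ x i = T *ᵥ y i := by
      ext k
      have := hs (g k) i
      rw [hg] at this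
      exact this.trans (dotProduct_comm _ _)
    rw [← Matrix.mulVec_mulVec, this, Matrix.mulVec_mulVec, Matrix.nonsing_inv_mul _ hTd,
      Matrix.one_mulVec]

/-- Equations (P) from equations (Q). -/
lemma AP_dual {n m : ℕ} (A : Matrix (Fin n) (Fin n) ℝ) (B : Matrix (Fin n) (Fin m) ℝ)
    (C : Matrix (Fin m) (Fin n) ℝ) (D : Matrix (Fin m) (Fin m) ℝ)
    (P Q : Matrix (Fin n) (Fin n) ℝ) (hPQ : P * Q = 1) (hQs : Q.IsSymm)
    (h1 : Aᵀ * Q * A - Q = Cᵀ * C) (h2 : Cᵀ * D = Aᵀ * Q * B) (h3 : Dᵀ * D - Bᵀ * Q * B = 1) :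
    A * P * Aᵀ - P = B * Bᵀ ∧ B * Dᵀ = A * P * Cᵀ ∧ D * Dᵀ - C * P * Cᵀ = 1 := by
  have hQP : Q * P = 1 := _root_.mul_eq_one_comm.1 hPQ
  have h2' : Dᵀ * C = Bᵀ * Q * A := by
    have := congrArg Matrix.transpose h2
    simpa [Matrix.transpose_mul, hQs.eq, Matrix.mul_assoc] using this
  have e1 : Matrix.fromBlocks (P * Aᵀ * Q) (-(P * Cᵀ)) (-(Bᵀ * Q)) Dᵀ *
      Matrix.fromBlocks A B C D = 1 := by
    rw [Matrix.fromBlocks_multiply, ← Matrix.fromBlocks_one]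
    congr 1
    · have : P * (Aᵀ * Q * A - Cᵀ * C) = 1 := by rw [← h1]; simpa using hPQ
      rw [Matrix.mul_sub] at this
      rw [← this]; simp [Matrix.mul_assoc, sub_eq_add_neg]
    · have : P * (Cᵀ * D) = P * (Aᵀ * Q * B) := by rw [h2]
      simp only [Matrix.neg_mul, Matrix.mul_assoc] at this ⊢
      rw [this]; simp
    · rw [h2']; simp
    · rw [← h3]; simp [sub_eq_add_neg, add_comm]
  have e2 := _root_.mul_eq_one_comm.1 e1
  rw [Matrix.fromBlocks_multiply, ← Matrix.fromBlocks_one, Matrix.fromBlocks_inj] at e2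
  obtain ⟨a, b, c, d⟩ := e2
  refine ⟨?_, ?_, ?_⟩
  · have := congrArg (· * P) a
    simp only [Matrix.add_mul, Matrix.mul_neg, Matrix.neg_mul, Matrix.mul_assoc, hQP, Matrix.mul_one,
      Matrix.one_mul] at this
    rw [sub_eq_iff_eq_add, Matrix.mul_assoc]
    nth_rewrite 2 [← this]
    abel
  · rw [← sub_eq_zero, ← b]; simp [Matrix.mul_assoc, sub_eq_add_neg, add_comm]
  · rw [← d]; simp [Matrix.mul_assoc, sub_eq_add_neg, add_comm]

lemma AP_kernel {n m : ℕ} (A : Matrix (Fin n) (Fin n) ℝ) (B : Matrix (Fin n) (Fin m) ℝ)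
    (C : Matrix (Fin m) (Fin n) ℝ) (D : Matrix (Fin m) (Fin m) ℝ) (s z w : ℝ) (hsw : s * w = 1)
    (R S : Matrix (Fin n) (Fin n) ℝ) (Gw : Matrix (Fin m) (Fin m) ℝ)
    (hR : (z • (1 : Matrix (Fin n) (Fin n) ℝ) - A) * R = 1)
    (hS : S * (s • (1 : Matrix (Fin n) (Fin n) ℝ) - A) = 1)
    (hG : Gwᵀ * (C * S * B + D) = 1) :
    (1 - z * w) • (((-s) • (Gwᵀ * C * S)) * (R * B)) = 1 - Gwᵀ * (C * R * B + D) := by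
  have hSR : S - R = (z - s) • (S * R) := by
    have : S * ((z • (1 : Matrix (Fin n) (Fin n) ℝ) - A) * R) -
        (S * (s • (1 : Matrix (Fin n) (Fin n) ℝ) - A)) * R = (z - s) • (S * R) := by
      simp only [Matrix.mul_assoc, ← Matrix.mul_sub, ← Matrix.sub_mul]
      simp [sub_smul, Matrix.mul_sub, Matrix.sub_mul]
    rw [hR, hS] at this
    simpa using this
  have e : (1 - z * w) * (-s) = z - s := by linear_combination z * hsw
  rw [Matrix.smul_mul, smul_smul, e]
  calc (z - s) • (Gwᵀ * C * S * (R * B)) = Gwᵀ * (C * ((z - s) • (S * R)) * B) := by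
        simp [Matrix.mul_assoc]
    _ = Gwᵀ * (C * S * B + D) - Gwᵀ * (C * R * B + D) := by
        rw [← hSR]; simp [Matrix.mul_sub, Matrix.sub_mul, Matrix.mul_add]
    _ = _ := by rw [hG]

theorem allpass_exists_P_Q
    (n m : ℕ) (A : Matrix (Fin n) (Fin n) ℝ) (B : Matrix (Fin n) (Fin m) ℝ)
    (C : Matrix (Fin m) (Fin n) ℝ) (D : Matrix (Fin m) (Fin m) ℝ)
    (hreach : Reachable A B) (hobs : Observable A C) (hap : AllPass A B C D) :
    ∃ P Q : Matrix (Fin n) (Fin n) ℝ,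
      P.IsSymm ∧ Q.IsSymm ∧ IsUnit P ∧ IsUnit Q ∧ P * Q = 1 ∧
      (A * P * Aᵀ - P = B * Bᵀ ∧ B * Dᵀ = A * P * Cᵀ ∧ D * Dᵀ - C * P * Cᵀ = 1) ∧
      (Aᵀ * Q * A - Q = Cᵀ * C ∧ Cᵀ * D = Aᵀ * Q * B ∧ Dᵀ * D - Bᵀ * Q * B = 1) := by
  let R : ℝ → Matrix (Fin n) (Fin n) ℝ := fun z => (z • (1 : Matrix (Fin n) (Fin n) ℝ) - A)⁻¹
  let G : ℝ → Matrix (Fin m) (Fin m) ℝ := fun z => C * R z * B + D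
  let X : ℝ → Matrix (Fin n) (Fin m) ℝ := fun z => R z * B
  let Y : ℝ → Matrix (Fin m) (Fin n) ℝ := fun w => (-w⁻¹) • ((G w)ᵀ * C * R w⁻¹)
  have hR1 : ∀ z, AP_good A z → (z • (1 : Matrix (Fin n) (Fin n) ℝ) - A) * R z = 1 :=
    fun z hz => Matrix.mul_nonsing_inv _ ((Matrix.isUnit_iff_isUnit_det _).1 hz.2.1)
  have hR2 : ∀ z, AP_good A z → R z⁻¹ * (z⁻¹ • (1 : Matrix (Fin n) (Fin n) ℝ) - A) = 1 :=
    fun z hz => Matrix.nonsing_inv_mul _ ((Matrix.isUnit_iff_isUnit_det _).1 hz.2.2)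
  have hpos : ∀ z, AP_good A z → z ≠ 0 := fun z hz => (zero_lt_one.trans hz.1).ne'
  have hGG : ∀ w, AP_good A w → (G w)ᵀ * G w⁻¹ = 1 := by
    intro w hw
    have et : w⁻¹ • (1 : Matrix (Fin n) (Fin n) ℝ) - Aᵀ =
        (w⁻¹ • (1 : Matrix (Fin n) (Fin n) ℝ) - A)ᵀ := by simp
    have h1 := hap w (hpos w hw) hw.2.1 (by rw [et]; exact (Matrix.isUnit_transpose _).2 hw.2.2)
    have h2 : Bᵀ * (w⁻¹ • (1 : Matrix (Fin n) (Fin n) ℝ) - Aᵀ)⁻¹ * Cᵀ + Dᵀ = (G w⁻¹)ᵀ := by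
      rw [et, ← Matrix.transpose_nonsing_inv]
      simp [G, R, Matrix.transpose_mul, Matrix.mul_assoc]
    rw [h2] at h1
    have h3 := _root_.mul_eq_one_comm.1 h1
    have h4 := congrArg Matrix.transpose h3
    rw [Matrix.transpose_mul, Matrix.transpose_transpose, Matrix.transpose_one] at h4
    exact h4
  have hK : ∀ w z, AP_good A w → AP_good A z →
      (1 - z * w) • (Y w * X z) = 1 - (G w)ᵀ * G z := fun w z hw hz =>
    AP_kernel A B C D w⁻¹ z w (inv_mul_cancel₀ (hpos w hw)) (R z) (R w⁻¹) (G w)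
      (hR1 z hz) (hR2 w hw) (hGG w hw)
  have hsym : ∀ w z, AP_good A w → AP_good A z → Y w * X z = (Y z * X w)ᵀ := by
    intro w z hw hz
    have hne : (1 - z * w) ≠ 0 := by nlinarith [hw.1, hz.1]
    apply smul_right_injective _ hne
    have h2 := congrArg Matrix.transpose (hK z w hz hw)
    rw [Matrix.transpose_smul, mul_comm w z] at h2
    simp only
    rw [hK w z hw hz, h2]
    simp [Matrix.transpose_mul]
  obtain ⟨Q, hQs, hQ⟩ := AP_interp (ι := {z // AP_good A z} × (Fin m → ℝ))
    (fun i => X i.1 *ᵥ i.2) (fun i => (Y i.1)ᵀ *ᵥ i.2)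
    (by
      intro v hv
      have := (AP_reach A B hreach (Matrix.replicateRow Unit v) 0 (by
        intro z hz
        rw [add_zero]
        ext i j
        have := hv (⟨z, hz⟩, Pi.single j 1)
        simp only [Matrix.mulVec_single_one] at this
        exact this)).1
      ext i
      exact congrFun (congrFun this ()) i)
    (by
      rintro ⟨⟨w, hw⟩, u⟩ ⟨⟨z, hz⟩, u'⟩
      simp only
      rw [Matrix.mulVec_transpose, Matrix.mulVec_transpose, ← Matrix.dotProduct_mulVec,
        ← Matrix.dotProduct_mulVec, Matrix.mulVec_mulVec, Matrix.mulVec_mulVec, hsym w z hw hz,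
        Matrix.mulVec_transpose, dotProduct_comm, ← Matrix.dotProduct_mulVec])
  have hQX : ∀ z, AP_good A z → Q * X z = (Y z)ᵀ := by
    intro z hz
    ext i j
    have := congrFun (hQ (⟨z, hz⟩, Pi.single j 1)) i
    simp only [Matrix.mulVec_single_one] at this
    exact this
  have hXQ : ∀ z, AP_good A z → (X z)ᵀ * Q = Y z := by
    intro z hz
    have := congrArg Matrix.transpose (hQX z hz)
    simpa [Matrix.transpose_mul, hQs.eq] using this
  have hE : ∀ w z, AP_good A w → AP_good A z →
      ((X w)ᵀ * (Aᵀ * Q * A - Q - Cᵀ * C) + (Bᵀ * Q * A - Dᵀ * C)) * X z +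
      ((X w)ᵀ * (Aᵀ * Q * B - Cᵀ * D) + (Bᵀ * Q * B - Dᵀ * D + 1)) = 0 := by
    intro w z hw hz
    have hAX : ∀ z, AP_good A z → A * X z + B = z • X z := by
      intro z hz
      have := congrArg (· * B) (hR1 z hz)
      simp only [Matrix.sub_mul, Matrix.smul_mul, Matrix.one_mul, Matrix.mul_assoc] at this
      exact (sub_eq_iff_eq_add'.1 this).symm
    have hG : ∀ z, G z = C * X z + D := fun z => by simp [G, X, Matrix.mul_assoc]
    have h1 : (A * X w + B)ᵀ * Q * (A * X z + B) - (X w)ᵀ * Q * X z -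
        (G w)ᵀ * G z + 1 = 0 := by
      rw [hAX w hw, hAX z hz]
      have := hK w z hw hz
      rw [← hXQ w hw] at this
      rw [sub_add, sub_eq_zero]
      rw [← neg_sub 1, ← this, Matrix.transpose_smul, Matrix.smul_mul, Matrix.smul_mul,
        Matrix.mul_smul]
      module
    rw [← h1, hG, hG]
    simp only [Matrix.transpose_add, Matrix.transpose_mul, Matrix.add_mul, Matrix.mul_add,
      Matrix.sub_mul, Matrix.mul_sub, Matrix.mul_assoc]
    abel
  have hE1 := fun w (hw : AP_good A w) => AP_reach A B hreach _ _ (fun z hz => hE w z hw hz)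
  have hEa := AP_reach A B hreach (Aᵀ * Q * A - Q - Cᵀ * C)ᵀ (Bᵀ * Q * A - Dᵀ * C)ᵀ (by
    intro z hz
    have := congrArg Matrix.transpose (hE1 z hz).1
    rw [Matrix.transpose_add, Matrix.transpose_mul, Matrix.transpose_transpose] at this
    exact this)
  have hEb := AP_reach A B hreach (Aᵀ * Q * B - Cᵀ * D)ᵀ (Bᵀ * Q * B - Dᵀ * D + 1)ᵀ (by
    intro z hz
    have := congrArg Matrix.transpose (hE1 z hz).2
    rw [Matrix.transpose_add, Matrix.transpose_mul, Matrix.transpose_transpose] at this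
    exact this)
  simp only [Matrix.transpose_eq_zero] at hEa hEb
  have q1 : Aᵀ * Q * A - Q = Cᵀ * C := sub_eq_zero.1 hEa.1
  have q2 : Cᵀ * D = Aᵀ * Q * B := (sub_eq_zero.1 hEb.1).symm
  have q3 : Dᵀ * D - Bᵀ * Q * B = 1 := by
    rw [← sub_eq_zero, ← neg_eq_zero, ← hEb.2]; abel
  have hQu : IsUnit Q := by
    rw [← Matrix.mulVec_injective_iff_isUnit]
    refine (injective_iff_map_eq_zero (Matrix.mulVecLin Q)).2 ?_
    intro v hv
    rw [Matrix.mulVecLin_apply] at hv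
    apply AP_obs A C hobs
    intro z hz
    have h1 : Y z *ᵥ v = 0 := by
      rw [← hXQ z hz, ← Matrix.mulVec_mulVec, hv, Matrix.mulVec_zero]
    have h2 : (G z)ᵀ *ᵥ ((C * R z⁻¹) *ᵥ v) = 0 := by
      have h3 := Matrix.smul_mulVec (-z⁻¹) ((G z)ᵀ * C * R z⁻¹) v
      rw [show (-z⁻¹) • ((G z)ᵀ * C * R z⁻¹) = Y z from rfl, h1] at h3
      have h4 := (smul_eq_zero.1 h3.symm).resolve_left (neg_ne_zero.2 (inv_ne_zero (hpos z hz)))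
      rw [Matrix.mulVec_mulVec, ← Matrix.mul_assoc]
      exact h4
    have h5 := congrArg (fun u => G z⁻¹ *ᵥ u) h2
    simp only [Matrix.mulVec_mulVec _ _ (G z)ᵀ, Matrix.mulVec_zero] at h5
    rw [Matrix.mulVec_mulVec, ← Matrix.mul_assoc, _root_.mul_eq_one_comm.1 (hGG z hz),
      Matrix.one_mul] at h5
    exact h5
  have hQd := (Matrix.isUnit_iff_isUnit_det _).1 hQu
  have hPQ : Q⁻¹ * Q = 1 := Matrix.nonsing_inv_mul _ hQd
  refine ⟨Q⁻¹, Q, ?_, hQs, ?_, hQu, hPQ, AP_dual A B C D _ Q hPQ hQs q1 q2 q3, q1, q2, q3⟩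
  · rw [Matrix.IsSymm, Matrix.transpose_nonsing_inv, hQs.eq]
  · exact (Matrix.isUnit_nonsing_inv_iff).2 hQu
end
end

section
/- Let A ∈ ℝ^{n×n} and B ∈ ℝ^{n×m} with (A,B) reachable, and let P ∈ ℝ^{n×n} be symmetric. Then P satisfies the Stein equation A P Aᵀ − P = B Bᵀ if and only if there exist matrices C ∈ ℝ^{m×n} and D ∈ ℝ^{m×m} such that (A,C) is observable and P satisfies the full system A P Aᵀ − P = B Bᵀ, B Dᵀ = A P Cᵀ, D Dᵀ − C P Cᵀ = I (so that Q(z) = C(zI−A)⁻¹B + D is a minimal realization of an all-pass function). In this case P is necessarily invertible and I + Bᵀ P⁻¹ B is positive semidefinite. -/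
open Matrix

noncomputable section

theorem surj_aux {n : ℕ} (K : Submodule ℝ (Fin n → ℝ)) (L : Matrix (Fin n) (Fin n) ℝ)
    (hK : ∀ v ∈ K, L *ᵥ v ∈ K) (hinj : ∀ v ∈ K, L *ᵥ v = 0 → v = 0) :
    ∀ x ∈ K, ∃ y ∈ K, L *ᵥ y = x := by
  intro x hx
  let f : K →ₗ[ℝ] K := (Matrix.mulVecLin L).restrict hK
  have hf : Function.Injective f := by
    rw [← LinearMap.ker_eq_bot, LinearMap.ker_eq_bot']
    intro v hv
    have : L *ᵥ (v : Fin n → ℝ) = 0 := by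
      have := congrArg Subtype.val hv
      exact this
    exact Subtype.ext (hinj v v.2 this)
  obtain ⟨y, hy⟩ := (LinearMap.injective_iff_surjective.mp hf) ⟨x, hx⟩
  refine ⟨y, y.2, ?_⟩
  have := congrArg Subtype.val hy
  exact this

theorem reach_aux {n m : ℕ} {A : Matrix (Fin n) (Fin n) ℝ} {B : Matrix (Fin n) (Fin m) ℝ}
    (hreach : Reachable A B) (S : Submodule ℝ (Fin n → ℝ))
    (hA : ∀ v ∈ S, Aᵀ *ᵥ v ∈ S) (hB : ∀ v ∈ S, Bᵀ *ᵥ v = 0) : ∀ v ∈ S, v = 0 := by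
  have hpow : ∀ k : ℕ, ∀ v ∈ S, (Aᵀ ^ k) *ᵥ v ∈ S := by
    intro k
    induction k with
    | zero => intro v hv; simpa using hv
    | succ k ih =>
      intro v hv
      rw [pow_succ, ← Matrix.mulVec_mulVec]
      exact ih _ (hA v hv)
  intro v hv
  have key : ∀ w : Fin n → ℝ, v ⬝ᵥ w = 0 := by
    intro w
    have hw : w ∈ Submodule.span ℝ
        {v : Fin n → ℝ | ∃ k < Fintype.card (Fin n), ∃ j : Fin m, v = (A ^ k) *ᵥ (fun i => B i j)} := by
      have h := hreach
      unfold Reachable at h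
      rw [h]; trivial
    induction hw using Submodule.span_induction with
    | mem x hx =>
      obtain ⟨k, -, j, rfl⟩ := hx
      have h1 := congrFun (hB _ (hpow k v hv)) j
      rw [Matrix.dotProduct_mulVec, ← Matrix.mulVec_transpose, Matrix.transpose_pow,
        dotProduct_comm]
      exact h1
    | zero => simp
    | add x y _ _ hx hy => rw [dotProduct_add, hx, hy, add_zero]
    | smul a x _ hx => rw [dotProduct_smul, hx, smul_zero]
  exact dotProduct_self_eq_zero.mp (key v)

theorem obs_aux {n m : ℕ} {A : Matrix (Fin n) (Fin n) ℝ} {C : Matrix (Fin m) (Fin n) ℝ}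
    (v : Fin n → ℝ) (h : ∀ k < Fintype.card (Fin n), (C * A ^ k) *ᵥ v = 0) (k : ℕ) :
    (C * A ^ k) *ᵥ v = 0 := by
  rw [Matrix.pow_eq_aeval_mod_charpoly]
  rcases Nat.eq_zero_or_pos n with hn | hn
  · subst hn
    rw [Subsingleton.elim v 0, Matrix.mulVec_zero]
  have hdeg : (Polynomial.X ^ k %ₘ A.charpoly).natDegree < n := by
    have := Polynomial.natDegree_modByMonic_lt (Polynomial.X ^ k) (Matrix.charpoly_monic A)
      (by
        intro h1
        have h2 := Matrix.charpoly_natDegree_eq_dim A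
        rw [h1] at h2
        simp at h2; omega)
    simpa [Matrix.charpoly_natDegree_eq_dim] using this
  rw [Polynomial.aeval_eq_sum_range' hdeg, Matrix.mul_sum, Matrix.sum_mulVec]
  refine Finset.sum_eq_zero fun i hi => ?_
  rw [Matrix.mul_smul, Matrix.smul_mulVec, h i (by simpa using hi), smul_zero]

theorem allpass_aux {n m : ℕ} {A P : Matrix (Fin n) (Fin n) ℝ} {B : Matrix (Fin n) (Fin m) ℝ}
    {C : Matrix (Fin m) (Fin n) ℝ} {D : Matrix (Fin m) (Fin m) ℝ} (hP : P.IsSymm)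
    (h1 : A * P * Aᵀ - P = B * Bᵀ) (h2 : B * Dᵀ = A * P * Cᵀ) (h3 : D * Dᵀ - C * P * Cᵀ = 1) :
    AllPass A B C D := by
  intro z hz hE hF
  have h2' : D * Bᵀ = C * P * Aᵀ := by
    have := congrArg Matrix.transpose h2
    simpa [Matrix.transpose_mul, hP.eq, Matrix.mul_assoc] using this
  have hE1 := Matrix.nonsing_inv_mul _ ((Matrix.isUnit_iff_isUnit_det _).mp hE)
  have hF1 := Matrix.mul_nonsing_inv _ ((Matrix.isUnit_iff_isUnit_det _).mp hF)
  generalize (z • (1 : Matrix (Fin n) (Fin n) ℝ) - A)⁻¹ = E at *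
  generalize (z⁻¹ • (1 : Matrix (Fin n) (Fin n) ℝ) - Aᵀ)⁻¹ = F at *
  have hEA : E * A = z • E - 1 := by
    rw [← hE1, Matrix.mul_sub]; simp
  have hFA : Aᵀ * F = z⁻¹ • F - 1 := by
    rw [← hF1, Matrix.sub_mul]; simp
  have e1 : E * (B * Bᵀ) * F = P - z • (E * P) - z⁻¹ • (P * F) := by
    rw [← h1]
    have : E * (A * P * Aᵀ - P) * F = (E * A) * P * (Aᵀ * F) - E * P * F := by
      noncomm_ring
    rw [this, hEA, hFA]
    simp only [Matrix.sub_mul, Matrix.mul_sub, Matrix.smul_mul, Matrix.mul_smul, Matrix.one_mul,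
      Matrix.mul_one, smul_sub, smul_smul, inv_mul_cancel₀ hz, one_smul]
    abel
  have e2 : E * (B * Dᵀ) = (z • (E * P) - P) * Cᵀ := by
    rw [h2, ← Matrix.mul_assoc, ← Matrix.mul_assoc, hEA]
    simp [Matrix.sub_mul]
  have e3 : (D * Bᵀ) * F = C * (z⁻¹ • (P * F) - P) := by
    rw [h2', Matrix.mul_assoc, hFA, Matrix.mul_assoc]
    simp [Matrix.mul_sub]
  have e4 : (C * E * B + D) * (Bᵀ * F * Cᵀ + Dᵀ) =
      C * (E * (B * Bᵀ) * F) * Cᵀ + C * (E * (B * Dᵀ)) + ((D * Bᵀ) * F) * Cᵀ + D * Dᵀ := by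
    simp only [Matrix.add_mul, Matrix.mul_add, Matrix.mul_assoc]
    abel
  rw [e4, e1, e2, e3, ← h3]
  simp only [Matrix.sub_mul, Matrix.mul_sub, Matrix.smul_mul, Matrix.mul_smul, Matrix.mul_assoc]
  abel

theorem unit_aux {n m : ℕ} {A P : Matrix (Fin n) (Fin n) ℝ} {B : Matrix (Fin n) (Fin m) ℝ}
    (hreach : Reachable A B) (hP : P.IsSymm)
    (h1 : A * P * Aᵀ - P = B * Bᵀ) : IsUnit P := by
  have hinjunit : ∀ M : Matrix (Fin n) (Fin n) ℝ, (∀ v, M *ᵥ v = 0 → v = 0) → IsUnit M := by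
    intro M hM
    rw [← Matrix.mulVec_injective_iff_isUnit]
    intro x y hxy
    have := hM (x - y) (by rw [Matrix.mulVec_sub]; exact sub_eq_zero.mpr hxy)
    exact sub_eq_zero.mp this
  -- `1` is not an eigenvalue
  have hM : IsUnit (Aᵀ - 1) := by
    apply hinjunit
    intro v hv
    refine reach_aux hreach (LinearMap.ker (Matrix.mulVecLin (Aᵀ - 1))) ?_ ?_ v hv
    · intro w hw
      have hw' : (Aᵀ - 1) *ᵥ w = 0 := hw
      have : Aᵀ *ᵥ w = w := by
        rw [Matrix.sub_mulVec, Matrix.one_mulVec] at hw'; exact sub_eq_zero.mp hw'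
      rw [this]; exact hw
    · intro w hw
      have hw' : (Aᵀ - 1) *ᵥ w = 0 := hw
      have hw2 : Aᵀ *ᵥ w = w := by
        rw [Matrix.sub_mulVec, Matrix.one_mulVec] at hw'; exact sub_eq_zero.mp hw'
      have e : (B * Bᵀ) *ᵥ w = A *ᵥ (P *ᵥ w) - P *ᵥ w := by
        rw [← h1, Matrix.sub_mulVec, ← Matrix.mulVec_mulVec, ← Matrix.mulVec_mulVec, hw2]
      have e2 : w ⬝ᵥ ((B * Bᵀ) *ᵥ w) = 0 := by
        rw [e, dotProduct_sub, Matrix.dotProduct_mulVec w A, ← Matrix.mulVec_transpose, hw2, sub_self]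
      rw [← Matrix.mulVec_mulVec, Matrix.dotProduct_mulVec, ← Matrix.mulVec_transpose] at e2
      exact dotProduct_self_eq_zero.mp e2
  obtain ⟨u, hu⟩ := hM
  -- N = Nᵀ-inverse
  obtain ⟨R, hR1, hR2⟩ : ∃ R : Matrix (Fin n) (Fin n) ℝ, (Aᵀ - 1) * R = 1 ∧ R * (Aᵀ - 1) = 1 :=
    ⟨(u⁻¹ : (Matrix (Fin n) (Fin n) ℝ)ˣ), by rw [← hu]; simp, by rw [← hu]; simp⟩
  have hRt : Rᵀ * (A - 1) = 1 := by
    have := congrArg Matrix.transpose hR1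
    simpa [Matrix.transpose_mul] using this
  have hN : P + P * R + Rᵀ * P = Rᵀ * (B * Bᵀ) * R := by
    have e : A * P * Aᵀ - P = (A - 1) * P * (Aᵀ - 1) + (A - 1) * P + P * (Aᵀ - 1) := by
      noncomm_ring
    rw [← h1, e]
    have : Rᵀ * ((A - 1) * P * (Aᵀ - 1) + (A - 1) * P + P * (Aᵀ - 1)) * R =
      (Rᵀ * (A - 1)) * P * ((Aᵀ - 1) * R) + (Rᵀ * (A - 1)) * (P * R) + Rᵀ * P * ((Aᵀ - 1) * R) := by
      simp only [Matrix.mul_add, Matrix.add_mul, Matrix.mul_assoc]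
    rw [this, hR1, hRt]
    simp
  apply hinjunit
  intro v hv
  set K := LinearMap.ker (Matrix.mulVecLin P) with hK
  have memK : ∀ w, w ∈ K ↔ P *ᵥ w = 0 := by intro w; simp [hK]
  have kB : ∀ w ∈ K, Bᵀ *ᵥ (R *ᵥ w) = 0 := by
    intro w hw
    rw [memK] at hw
    have e := congrArg (fun M => w ⬝ᵥ (M *ᵥ w)) hN
    simp only [Matrix.add_mulVec, ← Matrix.mulVec_mulVec, dotProduct_add, hw, Matrix.mulVec_zero,
      dotProduct_zero] at e
    rw [Matrix.dotProduct_mulVec w P, ← Matrix.mulVec_transpose, hP.eq, hw, zero_dotProduct,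
      Matrix.dotProduct_mulVec w Rᵀ, ← Matrix.mulVec_transpose, Matrix.transpose_transpose,
      Matrix.dotProduct_mulVec _ B, ← Matrix.mulVec_transpose] at e
    apply dotProduct_self_eq_zero.mp
    linarith
  have kR : ∀ w ∈ K, R *ᵥ w ∈ K := by
    intro w hw
    have hb := kB w hw
    rw [memK] at hw ⊢
    have e := congrArg (fun M => M *ᵥ w) hN
    simpa only [Matrix.add_mulVec, ← Matrix.mulVec_mulVec, hw, Matrix.mulVec_zero, hb,
      zero_add, add_zero] using e
  have kS := surj_aux K R kR (by
    intro w _ hw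
    have : ((Aᵀ - 1) * R) *ᵥ w = 0 := by rw [← Matrix.mulVec_mulVec, hw, Matrix.mulVec_zero]
    simpa [hR1] using this)
  refine reach_aux hreach K ?_ ?_ v ((memK v).mpr hv)
  · intro x hx
    obtain ⟨y, hy, rfl⟩ := kS x hx
    have : Aᵀ *ᵥ (R *ᵥ y) = y + R *ᵥ y := by
      have : ((Aᵀ - 1) * R) *ᵥ y = y := by rw [hR1, Matrix.one_mulVec]
      rw [← Matrix.mulVec_mulVec, Matrix.sub_mulVec, Matrix.one_mulVec] at this
      rw [← sub_eq_iff_eq_add]; exact this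
    rw [this]
    exact K.add_mem hy hx
  · intro x hx
    obtain ⟨y, hy, rfl⟩ := kS x hx
    exact kB y hy

section
open scoped MatrixOrder

theorem factor_aux {m : ℕ} {G : Matrix (Fin m) (Fin m) ℝ} (hG : G.PosSemidef) :
    ∃ Y : Matrix (Fin m) (Fin m) ℝ, G = star Y * Y :=
  CStarAlgebra.nonneg_iff_eq_star_mul_self.mp hG.nonneg

end

theorem spectral_aux {n : ℕ} {P : Matrix (Fin n) (Fin n) ℝ} (hP : P.IsSymm) (hu : IsUnit P) :
    ∃ (U : Matrix (Fin n) (Fin n) ℝ) (l : Fin n → ℝ), (∀ i, l i ≠ 0) ∧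
      (∀ x, U *ᵥ x = 0 → x = 0) ∧
      ∀ x, (U *ᵥ x) ⬝ᵥ (P *ᵥ (U *ᵥ x)) = ∑ i, l i * x i ^ 2 := by
  have hH : P.IsHermitian := by
    rw [Matrix.IsHermitian, Matrix.conjTranspose_eq_transpose_of_trivial]; exact hP
  set U : Matrix (Fin n) (Fin n) ℝ := (hH.eigenvectorUnitary : Matrix (Fin n) (Fin n) ℝ) with hU
  have hUU : Uᵀ * U = 1 := by
    have := Unitary.coe_star_mul_self hH.eigenvectorUnitary
    rwa [Matrix.star_eq_conjTranspose, Matrix.conjTranspose_eq_transpose_of_trivial] at this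
  have hPU : P = U * Matrix.diagonal hH.eigenvalues * Uᵀ := by
    have := hH.spectral_theorem
    rw [Unitary.conjStarAlgAut_apply, Matrix.star_eq_conjTranspose,
      Matrix.conjTranspose_eq_transpose_of_trivial] at this
    exact this
  have hD : Uᵀ * P * U = Matrix.diagonal hH.eigenvalues := by
    calc Uᵀ * P * U = Uᵀ * (U * Matrix.diagonal hH.eigenvalues * Uᵀ) * U := by
          exact congrArg (fun M => Uᵀ * M * U) hPU
      _ = Uᵀ * (U * Matrix.diagonal hH.eigenvalues * Uᵀ) * U := rfl
      _ = (Uᵀ * U) * Matrix.diagonal hH.eigenvalues * (Uᵀ * U) := by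
          simp only [Matrix.mul_assoc]
      _ = _ := by rw [hUU, Matrix.one_mul, Matrix.mul_one]
  refine ⟨U, hH.eigenvalues, ?_, ?_, ?_⟩
  · intro i hi
    have h1 := hH.det_eq_prod_eigenvalues
    have h2 : P.det ≠ 0 := ((Matrix.isUnit_iff_isUnit_det _).mp hu).ne_zero
    apply h2
    rw [h1]
    exact Finset.prod_eq_zero (Finset.mem_univ i) (by simpa using hi)
  · intro x hx
    have : (Uᵀ * U) *ᵥ x = 0 := by rw [← Matrix.mulVec_mulVec, hx, Matrix.mulVec_zero]
    simpa [hUU] using this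
  · intro x
    have : (U *ᵥ x) ⬝ᵥ (P *ᵥ (U *ᵥ x)) = x ⬝ᵥ ((Uᵀ * P * U) *ᵥ x) := by
      rw [← Matrix.mulVec_mulVec, ← Matrix.mulVec_mulVec, Matrix.dotProduct_mulVec x,
        ← Matrix.mulVec_transpose, Matrix.transpose_transpose]
    rw [this, hD]
    simp only [dotProduct, Matrix.mulVec_diagonal]
    exact Finset.sum_congr rfl fun i _ => by ring

theorem neg_aux {n m : ℕ} {A P : Matrix (Fin n) (Fin n) ℝ} {B : Matrix (Fin n) (Fin m) ℝ}
    (hP : P.IsSymm) (hu : IsUnit P) (h1 : A * P * Aᵀ - P = B * Bᵀ)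
    (a : Fin n → ℝ) (b : Fin m → ℝ) (hab : A *ᵥ (P *ᵥ a) = B *ᵥ b)
    (h0 : 0 ≤ a ⬝ᵥ (P *ᵥ a) - b ⬝ᵥ b) : a = 0 ∧ b = 0 := by
  obtain ⟨U, l, hl, hUinj, hUq⟩ := spectral_aux hP hu
  let pos : (Fin n → ℝ) →ₗ[ℝ] (Fin n → ℝ) :=
    Matrix.mulVecLin (U * Matrix.diagonal (fun i => if 0 < l i then 1 else 0))
  let neg : (Fin n → ℝ) →ₗ[ℝ] (Fin n → ℝ) :=
    Matrix.mulVecLin (U * Matrix.diagonal (fun i => if 0 < l i then 0 else 1))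
  have hpos : ∀ x, pos x = U *ᵥ (fun i => if 0 < l i then x i else 0) := by
    intro x
    simp only [pos, Matrix.mulVecLin_apply, ← Matrix.mulVec_mulVec]
    congr 1; ext i; simp [Matrix.mulVec_diagonal]
  have hneg : ∀ x, neg x = U *ᵥ (fun i => if 0 < l i then 0 else x i) := by
    intro x
    simp only [neg, Matrix.mulVecLin_apply, ← Matrix.mulVec_mulVec]
    congr 1; ext i; simp [Matrix.mulVec_diagonal]
  let pr1 : ((Fin n → ℝ) × ℝ × (Fin m → ℝ)) →ₗ[ℝ] (Fin n → ℝ) := LinearMap.fst _ _ _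
  let pr2 : ((Fin n → ℝ) × ℝ × (Fin m → ℝ)) →ₗ[ℝ] ℝ := LinearMap.fst _ _ _ ∘ₗ LinearMap.snd _ _ _
  let pr3 : ((Fin n → ℝ) × ℝ × (Fin m → ℝ)) →ₗ[ℝ] (Fin m → ℝ) :=
    LinearMap.snd _ _ _ ∘ₗ LinearMap.snd _ _ _
  let f : ((Fin n → ℝ) × ℝ × (Fin m → ℝ)) →ₗ[ℝ] ((Fin n → ℝ) × (Fin m → ℝ)) :=
    LinearMap.prod
      (Matrix.mulVecLin Aᵀ ∘ₗ pos ∘ₗ pr1 + pr2.smulRight a - neg ∘ₗ pr1)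
      (Matrix.mulVecLin Bᵀ ∘ₗ pos ∘ₗ pr1 + pr2.smulRight b - pr3)
  have hker : LinearMap.ker f ≠ ⊥ := by
    apply LinearMap.ker_ne_bot_of_finrank_lt
    simp
  obtain ⟨⟨x, t, u⟩, hx, hne⟩ := (Submodule.ne_bot_iff _).mp hker
  have hfx : f (x, t, u) = 0 := hx
  have e1 : Aᵀ *ᵥ (pos x) + t • a = neg x := by
    have : Aᵀ *ᵥ (pos x) + t • a - neg x = 0 := congrArg Prod.fst hfx
    exact sub_eq_zero.mp this
  have e2 : Bᵀ *ᵥ (pos x) + t • b = u := by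
    have : Bᵀ *ᵥ (pos x) + t • b - u = 0 := congrArg Prod.snd hfx
    exact sub_eq_zero.mp this
  have qpos : pos x ⬝ᵥ (P *ᵥ pos x) = ∑ i, if 0 < l i then l i * x i ^ 2 else 0 := by
    rw [hpos, hUq]
    exact Finset.sum_congr rfl fun i _ => by split_ifs <;> simp
  have qneg : neg x ⬝ᵥ (P *ᵥ neg x) = ∑ i, if 0 < l i then 0 else l i * x i ^ 2 := by
    rw [hneg, hUq]
    exact Finset.sum_congr rfl fun i _ => by split_ifs <;> simp
  set p := pos x with hp
  have symP : ∀ y z : Fin n → ℝ, y ⬝ᵥ (P *ᵥ z) = z ⬝ᵥ (P *ᵥ y) := by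
    intro y z
    rw [Matrix.dotProduct_mulVec, ← Matrix.mulVec_transpose, hP.eq, dotProduct_comm]
  have tA : ∀ y z : Fin n → ℝ, (Aᵀ *ᵥ y) ⬝ᵥ z = y ⬝ᵥ (A *ᵥ z) := by
    intro y z
    rw [Matrix.dotProduct_mulVec, ← Matrix.mulVec_transpose]
  have tB : ∀ (y : Fin n → ℝ) (z : Fin m → ℝ), (Bᵀ *ᵥ y) ⬝ᵥ z = y ⬝ᵥ (B *ᵥ z) := by
    intro y z
    rw [Matrix.dotProduct_mulVec, ← Matrix.mulVec_transpose]
  have stein : (Aᵀ *ᵥ p) ⬝ᵥ (P *ᵥ (Aᵀ *ᵥ p)) - (Bᵀ *ᵥ p) ⬝ᵥ (Bᵀ *ᵥ p) = p ⬝ᵥ (P *ᵥ p) := by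
    rw [tA, tB, Matrix.mulVec_mulVec p B, ← h1, Matrix.sub_mulVec, dotProduct_sub,
      ← Matrix.mulVec_mulVec, ← Matrix.mulVec_mulVec]
    ring
  have cross : (Aᵀ *ᵥ p) ⬝ᵥ (P *ᵥ a) = (Bᵀ *ᵥ p) ⬝ᵥ b := by
    rw [tA, tB, hab]
  have key : neg x ⬝ᵥ (P *ᵥ neg x) - u ⬝ᵥ u =
      p ⬝ᵥ (P *ᵥ p) + t ^ 2 * (a ⬝ᵥ (P *ᵥ a) - b ⬝ᵥ b) := by
    rw [← e1, ← e2, ← stein]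
    simp only [Matrix.mulVec_add, Matrix.mulVec_smul, dotProduct_add, add_dotProduct,
      smul_dotProduct, dotProduct_smul, smul_eq_mul]
    rw [symP a (Aᵀ *ᵥ p), cross, dotProduct_comm b (Bᵀ *ᵥ p)]
    ring
  have huu : 0 ≤ u ⬝ᵥ u := Finset.sum_nonneg fun i _ => mul_self_nonneg _
  have hposn : ∀ i ∈ Finset.univ, 0 ≤ (if 0 < l i then l i * x i ^ 2 else 0) := by
    intro i _; split_ifs <;> positivity
  have hnegn : ∀ i ∈ Finset.univ, (if 0 < l i then 0 else l i * x i ^ 2) ≤ 0 := by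
    intro i _; split_ifs with h
    · exact le_rfl
    · exact mul_nonpos_of_nonpos_of_nonneg (not_lt.mp h) (sq_nonneg _)
  have s1 := Finset.sum_nonneg hposn
  have s2 := Finset.sum_nonpos hnegn
  have s3 : 0 ≤ t ^ 2 * (a ⬝ᵥ (P *ᵥ a) - b ⬝ᵥ b) := mul_nonneg (sq_nonneg _) h0
  rw [qpos, qneg] at key
  have z1 := (Finset.sum_eq_zero_iff_of_nonneg hposn).mp (by linarith)
  have z2 := (Finset.sum_eq_zero_iff_of_nonpos hnegn).mp (by linarith)
  have hu0 : u = 0 := dotProduct_self_eq_zero.mp (by linarith)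
  have hx0 : x = 0 := by
    ext i
    have y1 := z1 i (Finset.mem_univ i)
    have y2 := z2 i (Finset.mem_univ i)
    by_cases h : 0 < l i
    · simpa [h, hl i] using y1
    · simpa [h, hl i] using y2
  have hp0 : p = 0 := by rw [hp, hx0, map_zero]
  have hn0 : neg x = 0 := by rw [hx0, map_zero]
  have ht : t ≠ 0 := by
    intro ht; apply hne; rw [hx0, ht, hu0]; rfl
  rw [hp0, hn0, Matrix.mulVec_zero, zero_add] at e1
  rw [hp0, hu0, Matrix.mulVec_zero, zero_add] at e2
  exact ⟨(smul_eq_zero.mp e1).resolve_left ht, (smul_eq_zero.mp e2).resolve_left ht⟩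

theorem completion_aux {n m : ℕ} {A P : Matrix (Fin n) (Fin n) ℝ} {B : Matrix (Fin n) (Fin m) ℝ}
    (hP : P.IsSymm) (hu : IsUnit P) (h1 : A * P * Aᵀ - P = B * Bᵀ) :
    ∃ (C : Matrix (Fin m) (Fin n) ℝ) (D : Matrix (Fin m) (Fin m) ℝ),
      B * Dᵀ = A * P * Cᵀ ∧ D * Dᵀ - C * P * Cᵀ = 1 := by
  let g : ((Fin n → ℝ) × (Fin m → ℝ)) →ₗ[ℝ] (Fin n → ℝ) :=
    Matrix.mulVecLin (A * P) ∘ₗ LinearMap.fst _ _ _ - Matrix.mulVecLin B ∘ₗ LinearMap.snd _ _ _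
  have hdim : Module.finrank ℝ (Fin m → ℝ) ≤ Module.finrank ℝ (LinearMap.ker g) := by
    have h := LinearMap.finrank_range_add_finrank_ker g
    have h' := Submodule.finrank_le (LinearMap.range g)
    simp at h h' ⊢
    omega
  obtain ⟨f, hf⟩ := finrank_le_iff_exists_linearMap.mp hdim
  let f' : (Fin m → ℝ) →ₗ[ℝ] ((Fin n → ℝ) × (Fin m → ℝ)) := (LinearMap.ker g).subtype ∘ₗ f
  let Z1 : Matrix (Fin n) (Fin m) ℝ := LinearMap.toMatrix' (LinearMap.fst _ _ _ ∘ₗ f')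
  let Z2 : Matrix (Fin m) (Fin m) ℝ := LinearMap.toMatrix' (LinearMap.snd _ _ _ ∘ₗ f')
  have hZ1 : ∀ c, Z1 *ᵥ c = (f' c).1 := fun c => LinearMap.toMatrix'_mulVec _ c
  have hZ2 : ∀ c, Z2 *ᵥ c = (f' c).2 := fun c => LinearMap.toMatrix'_mulVec _ c
  have hker : ∀ c, A *ᵥ (P *ᵥ (Z1 *ᵥ c)) = B *ᵥ (Z2 *ᵥ c) := by
    intro c
    have : (A * P) *ᵥ (f' c).1 - B *ᵥ (f' c).2 = 0 := (f c).2
    rw [hZ1, hZ2, Matrix.mulVec_mulVec]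
    exact sub_eq_zero.mp this
  have hZ : A * P * Z1 = B * Z2 := by
    apply Matrix.mulVec_injective
    funext c
    simp only [← Matrix.mulVec_mulVec]
    exact hker c
  have hG : (Z2ᵀ * Z2 - Z1ᵀ * P * Z1).PosDef := by
    apply Matrix.PosDef.of_dotProduct_mulVec_pos
    · rw [Matrix.IsHermitian, Matrix.conjTranspose_eq_transpose_of_trivial]
      simp [Matrix.transpose_mul, hP.eq, Matrix.mul_assoc]
    · intro c hc
      have e : star c ⬝ᵥ ((Z2ᵀ * Z2 - Z1ᵀ * P * Z1) *ᵥ c) =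
          (Z2 *ᵥ c) ⬝ᵥ (Z2 *ᵥ c) - (Z1 *ᵥ c) ⬝ᵥ (P *ᵥ (Z1 *ᵥ c)) := by
        rw [star_trivial, Matrix.sub_mulVec, dotProduct_sub, ← Matrix.mulVec_mulVec,
          ← Matrix.mulVec_mulVec, ← Matrix.mulVec_mulVec, Matrix.dotProduct_mulVec c Z2ᵀ,
          ← Matrix.mulVec_transpose, Matrix.dotProduct_mulVec c Z1ᵀ,
          ← Matrix.mulVec_transpose, Matrix.transpose_transpose, Matrix.transpose_transpose]
      rw [e]
      by_contra hcon
      obtain ⟨ha, hb⟩ := neg_aux hP hu h1 (Z1 *ᵥ c) (Z2 *ᵥ c) (hker c) (by linarith)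
      apply hc
      rw [hZ1] at ha
      rw [hZ2] at hb
      have : f c = 0 := Subtype.ext (Prod.ext ha hb)
      exact hf (by rw [this, map_zero])
  obtain ⟨S, hS⟩ : ∃ S : Matrix (Fin m) (Fin m) ℝ, S * (Z2ᵀ * Z2 - Z1ᵀ * P * Z1) * Sᵀ = 1 := by
    generalize Z2ᵀ * Z2 - Z1ᵀ * P * Z1 = G at hG
    have hu' := hG.isUnit
    obtain ⟨Y, hY⟩ : ∃ Y : Matrix (Fin m) (Fin m) ℝ, G = star Y * Y :=
      factor_aux hG.posSemidef
    rw [Matrix.star_eq_conjTranspose, Matrix.conjTranspose_eq_transpose_of_trivial] at hY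
    have hdet : IsUnit Y.det := by
      have h := (Matrix.isUnit_iff_isUnit_det _).mp hu'
      rw [hY, Matrix.det_mul] at h
      exact isUnit_of_mul_isUnit_right h
    have hy := Matrix.mul_nonsing_inv _ hdet
    refine ⟨(Y⁻¹)ᵀ, ?_⟩
    rw [hY, Matrix.transpose_transpose]
    calc (Y⁻¹)ᵀ * (Yᵀ * Y) * Y⁻¹ = (Y * Y⁻¹)ᵀ * (Y * Y⁻¹) := by
          simp only [Matrix.transpose_mul, Matrix.mul_assoc]
      _ = 1 := by rw [hy]; simp
  refine ⟨S * Z1ᵀ, S * Z2ᵀ, ?_, ?_⟩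
  · simp only [Matrix.transpose_mul, Matrix.transpose_transpose]
    rw [← Matrix.mul_assoc, ← Matrix.mul_assoc, hZ]
  · rw [← hS]
    simp only [Matrix.transpose_mul, Matrix.transpose_transpose, Matrix.mul_sub, Matrix.sub_mul,
      Matrix.mul_assoc]

theorem dual_aux {n m : ℕ} {A P : Matrix (Fin n) (Fin n) ℝ} {B : Matrix (Fin n) (Fin m) ℝ}
    {C : Matrix (Fin m) (Fin n) ℝ} {D : Matrix (Fin m) (Fin m) ℝ} (hP : P.IsSymm) (hu : IsUnit P)
    (h1 : A * P * Aᵀ - P = B * Bᵀ) (h2 : B * Dᵀ = A * P * Cᵀ) (h3 : D * Dᵀ - C * P * Cᵀ = 1) :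
    Aᵀ * P⁻¹ * A - Cᵀ * C = P⁻¹ ∧ Bᵀ * P⁻¹ * A = Dᵀ * C ∧ 1 + Bᵀ * P⁻¹ * B = Dᵀ * D := by
  have hdet := (Matrix.isUnit_iff_isUnit_det _).mp hu
  have i1 := Matrix.mul_nonsing_inv _ hdet
  have i2 := Matrix.nonsing_inv_mul _ hdet
  have h2' : D * Bᵀ = C * P * Aᵀ := by
    have := congrArg Matrix.transpose h2
    simpa [Matrix.transpose_mul, hP.eq, Matrix.mul_assoc] using this
  have h1' : A * P * Aᵀ - B * Bᵀ = P := by rw [← h1]; abel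
  have prod : Matrix.fromBlocks A B C D *
      Matrix.fromBlocks (P * Aᵀ * P⁻¹) (-(P * Cᵀ)) (-(Bᵀ * P⁻¹)) Dᵀ = 1 := by
    rw [Matrix.fromBlocks_multiply, ← Matrix.fromBlocks_one]
    congr 1
    · calc A * (P * Aᵀ * P⁻¹) + B * -(Bᵀ * P⁻¹) = (A * P * Aᵀ - B * Bᵀ) * P⁻¹ := by
            simp only [Matrix.add_mul, Matrix.neg_mul, Matrix.mul_assoc, Matrix.mul_neg, sub_eq_add_neg]
        _ = 1 := by rw [h1', i1]
    · rw [h2]; simp [Matrix.mul_assoc]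
    · have : C * (P * Aᵀ * P⁻¹) = D * Bᵀ * P⁻¹ := by rw [h2']; simp only [Matrix.mul_assoc]
      rw [this]; simp [Matrix.mul_assoc]
    · rw [← h3]; simp only [Matrix.mul_neg, Matrix.mul_assoc]; abel
  have prod' := mul_eq_one_comm.mp prod
  rw [Matrix.fromBlocks_multiply, ← Matrix.fromBlocks_one, Matrix.fromBlocks_inj] at prod'
  obtain ⟨a1, -, a3, a4⟩ := prod'
  refine ⟨?_, ?_, ?_⟩
  · have := congrArg (fun M => P⁻¹ * M) a1
    simp only [Matrix.mul_add, Matrix.neg_mul, Matrix.mul_neg, ← Matrix.mul_assoc, i2,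
      Matrix.one_mul, Matrix.mul_one] at this
    rw [sub_eq_add_neg]; exact this
  · rw [Matrix.neg_mul] at a3
    exact (neg_add_eq_zero.mp a3)
  · rw [← a4, Matrix.neg_mul]; abel

theorem observable_aux {n m : ℕ} {A P : Matrix (Fin n) (Fin n) ℝ} {B : Matrix (Fin n) (Fin m) ℝ}
    {C : Matrix (Fin m) (Fin n) ℝ} {D : Matrix (Fin m) (Fin m) ℝ}
    (hreach : Reachable A B) (hu : IsUnit P)
    (h1 : Aᵀ * P⁻¹ * A - Cᵀ * C = P⁻¹) (h2 : Bᵀ * P⁻¹ * A = Dᵀ * C) : Observable A C := by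
  have hdet := (Matrix.isUnit_iff_isUnit_det _).mp hu
  have i1 := Matrix.mul_nonsing_inv _ hdet
  have hinj : ∀ v, P⁻¹ *ᵥ v = 0 → v = 0 := by
    intro v hv
    have : (P * P⁻¹) *ᵥ v = 0 := by rw [← Matrix.mulVec_mulVec, hv, Matrix.mulVec_zero]
    simpa [i1] using this
  let K : Submodule ℝ (Fin n → ℝ) := ⨅ k : ℕ, LinearMap.ker (Matrix.mulVecLin (C * A ^ k))
  have memK : ∀ v, v ∈ K ↔ ∀ k, (C * A ^ k) *ᵥ v = 0 := by
    intro v; simp [K, Submodule.mem_iInf]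
  have kA : ∀ v ∈ K, A *ᵥ v ∈ K := by
    intro v hv
    rw [memK] at hv ⊢
    intro k
    rw [Matrix.mulVec_mulVec, Matrix.mul_assoc, ← pow_succ]
    exact hv (k + 1)
  have kC : ∀ v ∈ K, C *ᵥ v = 0 := by
    intro v hv
    simpa using (memK v).mp hv 0
  have e1 : ∀ v ∈ K, Aᵀ *ᵥ (P⁻¹ *ᵥ (A *ᵥ v)) = P⁻¹ *ᵥ v := by
    intro v hv
    have := congrArg (fun M => M *ᵥ v) h1
    simpa only [Matrix.sub_mulVec, ← Matrix.mulVec_mulVec, kC v hv, Matrix.mulVec_zero,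
      sub_zero] using this
  have e2 : ∀ v ∈ K, Bᵀ *ᵥ (P⁻¹ *ᵥ (A *ᵥ v)) = 0 := by
    intro v hv
    have := congrArg (fun M => M *ᵥ v) h2
    simpa only [← Matrix.mulVec_mulVec, kC v hv, Matrix.mulVec_zero] using this
  have kS := surj_aux K A kA (by
    intro v hv h
    apply hinj
    rw [← e1 v hv, h, Matrix.mulVec_zero, Matrix.mulVec_zero])
  intro v hv
  have hvK : v ∈ K := (memK v).mpr (obs_aux v hv)
  apply hinj
  refine reach_aux hreach (K.map (Matrix.mulVecLin P⁻¹)) ?_ ?_ _ (Submodule.mem_map_of_mem hvK)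
  · rintro _ ⟨w, hw, rfl⟩
    obtain ⟨y, hy, rfl⟩ := kS w hw
    exact ⟨y, hy, (e1 y hy).symm⟩
  · rintro _ ⟨w, hw, rfl⟩
    obtain ⟨y, hy, rfl⟩ := kS w hw
    exact e2 y hy

theorem stein_iff_allpass_completion
    (n m : ℕ) (A : Matrix (Fin n) (Fin n) ℝ) (B : Matrix (Fin n) (Fin m) ℝ)
    (hreach : Reachable A B)
    (P : Matrix (Fin n) (Fin n) ℝ) (hPsymm : P.IsSymm) :
    (A * P * Aᵀ - P = B * Bᵀ ↔
      ∃ (C : Matrix (Fin m) (Fin n) ℝ) (D : Matrix (Fin m) (Fin m) ℝ),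
        Observable A C ∧ AllPass A B C D ∧
        A * P * Aᵀ - P = B * Bᵀ ∧ B * Dᵀ = A * P * Cᵀ ∧ D * Dᵀ - C * P * Cᵀ = 1) ∧
    (A * P * Aᵀ - P = B * Bᵀ →
      IsUnit P ∧ ((1 : Matrix (Fin m) (Fin m) ℝ) + Bᵀ * P⁻¹ * B).PosSemidef) := by
  constructor
  · constructor
    · intro h1
      have hu := unit_aux hreach hPsymm h1
      obtain ⟨C, D, h2, h3⟩ := completion_aux hPsymm hu h1
      obtain ⟨d1, d2, -⟩ := dual_aux hPsymm hu h1 h2 h3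
      exact ⟨C, D, observable_aux hreach hu d1 d2, allpass_aux hPsymm h1 h2 h3, h1, h2, h3⟩
    · rintro ⟨C, D, -, -, h1, -, -⟩
      exact h1
  · intro h1
    have hu := unit_aux hreach hPsymm h1
    refine ⟨hu, ?_⟩
    obtain ⟨C, D, h2, h3⟩ := completion_aux hPsymm hu h1
    obtain ⟨-, -, d3⟩ := dual_aux hPsymm hu h1 h2 h3
    rw [d3, ← Matrix.conjTranspose_eq_transpose_of_trivial]
    exact Matrix.posSemidef_conjTranspose_mul_self D
end
end

section
/- Let A ∈ ℝ^{n×n} and C ∈ ℝ^{m×n} with (A,C) observable, and let Q ∈ ℝ^{n×n} be symmetric. Then Q satisfies the Stein equation Aᵀ Q A − Q = Cᵀ C if and only if there exist matrices B ∈ ℝ^{n×m} and D ∈ ℝ^{m×m} such that (A,B) is reachable and Q satisfies the full system Aᵀ Q A − Q = Cᵀ C, Cᵀ D = Aᵀ Q B, Dᵀ D − Bᵀ Q B = I (so that Q(z) = C(zI−A)⁻¹B + D is a minimal realization of an all-pass function). In this case Q is necessarily invertible and I + C Q⁻¹ Cᵀ is positive semidefinite. -/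
open Matrix

noncomputable section

lemma aux_sphere_infinite : (Metric.sphere (0 : ℂ) 1).Infinite := by
  apply (isPreconnected_sphere (by rw [Complex.rank_real_complex]; norm_num) (0 : ℂ) 1).infinite_of_nontrivial
  refine ⟨1, by simp, -1, by simp, ?_⟩
  intro h
  have := congrArg Complex.re h
  norm_num at this

open Polynomial in
lemma aux_key {n m : ℕ} (A Q : Matrix (Fin n) (Fin n) ℂ) (C : Matrix (Fin m) (Fin n) ℂ)
    (V : Matrix (Fin n) Unit ℂ) (hQ : Qᴴ = Q) (hst : Aᴴ * Q * A - Q = Cᴴ * C)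
    (hV : Q * V = 0) (k : ℕ) : C * A ^ k * V = 0 := by
  set c : ℂ →+* ℂ[X] := Polynomial.C with hc
  set M : Matrix (Fin n) (Fin n) ℂ[X] := 1 - (X : ℂ[X]) • A.map c with hM
  set H : Matrix (Fin n) Unit ℂ[X] := M.adjugate * V.map c with hH
  have hrel : H = M.det • V.map c + (X : ℂ[X]) • (A.map c * H) := by
    have h1 : M * H = M.det • V.map c := by
      rw [hH, ← Matrix.mul_assoc, Matrix.mul_adjugate, Matrix.smul_mul, Matrix.one_mul]
    have h2 : M * H = H - (X : ℂ[X]) • (A.map c * H) := by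
      rw [hM, Matrix.sub_mul, Matrix.one_mul, Matrix.smul_mul]
    rw [← h1, h2]; abel
  -- evaluation at a point of the unit circle
  have hcirc : ∀ z : ℂ, ‖z‖ = 1 → C * H.map (eval z) = 0 := by
    intro z hz
    set G := H.map (eval z) with hG
    have hGrel : G = (M.det.eval z) • V + z • (A * G) := by
      ext i j
      have := congrArg (eval z) (congrFun (congrFun hrel i) j)
      simpa [hG, Matrix.mul_apply, eval_finsetSum, hc] using this
    have hVQ : Vᴴ * Q = 0 := by
      have := congrArg conjTranspose hV
      rwa [conjTranspose_mul, hQ, conjTranspose_zero] at this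
    have hzz : star z * z = 1 := by
      have : star z * z = (starRingEnd ℂ) z * z := rfl
      rw [this, Complex.conj_mul', hz]; norm_num
    have h1 : Gᴴ * Q * G = Gᴴ * (Aᴴ * Q * A) * G := by
      set d := M.det.eval z
      have h3 : Q * G = z • (Q * (A * G)) := by
        conv_lhs => rw [hGrel]
        rw [Matrix.mul_add, Matrix.mul_smul, hV, Matrix.mul_smul]; simp
      have h4 : Gᴴ * Q = star z • ((A * G)ᴴ * Q) := by
        conv_lhs => rw [hGrel]
        rw [conjTranspose_add, conjTranspose_smul, conjTranspose_smul, Matrix.add_mul,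
          Matrix.smul_mul, hVQ, Matrix.smul_mul]; simp
      have h5 : Gᴴ * Q * (A * G) = star z • ((A * G)ᴴ * Q * (A * G)) := by
        rw [h4, Matrix.smul_mul]
      rw [Matrix.mul_assoc, h3, Matrix.mul_smul, ← Matrix.mul_assoc, h5, smul_smul, mul_comm, hzz,
        one_smul, conjTranspose_mul]
      simp only [Matrix.mul_assoc]
    have h2 : (C * G)ᴴ * (C * G) = 0 := by
      have : (C * G)ᴴ * (C * G) = Gᴴ * (Cᴴ * C) * G := by
        rw [conjTranspose_mul]; simp only [Matrix.mul_assoc]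
      rw [this, ← hst, Matrix.mul_sub, Matrix.sub_mul, ← h1, sub_self]
    open scoped ComplexOrder in
    exact Matrix.conjTranspose_mul_self_eq_zero.mp h2
  have hCH : C.map c * H = 0 := by
    ext1 i j
    apply Polynomial.eq_zero_of_infinite_isRoot
    apply aux_sphere_infinite.mono
    intro z hz
    have := congrFun (congrFun (hcirc z (by simpa using hz)) i) j
    simpa [Matrix.mul_apply, eval_finsetSum, hc, Polynomial.IsRoot] using this
  have hdet0 : M.det.eval 0 = 1 := by
    have := RingHom.map_det (evalRingHom (0:ℂ)) M
    simp only [coe_evalRingHom] at this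
    rw [this]
    have : (evalRingHom (0:ℂ)).mapMatrix M = 1 := by
      ext i j
      by_cases h : i = j
      · subst h; simp [hM]
      · simp [hM, h]
    rw [this, det_one]
  have hH0 : H.map (eval 0) = V := by
    ext i j
    have := congrArg (eval 0) (congrFun (congrFun hrel i) j)
    simpa [hdet0, hc] using this
  have hind : ∀ k : ℕ, (C * A ^ k).map c * H = 0 := by
    intro k
    induction k with
    | zero => simpa using hCH
    | succ k ih =>
      have hv : C * A ^ k * V = 0 := by
        rw [← hH0]
        ext i j
        have := congrArg (eval 0) (congrFun (congrFun ih i) j)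
        simpa [Matrix.mul_apply, eval_finsetSum, hc] using this
      have h2 : (X : ℂ[X]) • ((C * A ^ (k+1)).map c * H) = 0 := by
        have e : (C * A ^ (k+1)).map c = (C * A ^ k).map c * A.map c := by
          rw [pow_succ, ← Matrix.mul_assoc, Matrix.map_mul]
        have e2 : (C * A ^ k).map c * V.map c = 0 := by
          rw [← Matrix.map_mul, hv]; ext1 i j; simp
        have e3 : (X : ℂ[X]) • (A.map c * H) = H - M.det • V.map c := by
          rw [eq_sub_iff_add_eq, add_comm]; exact hrel.symm
        rw [e, Matrix.mul_assoc, ← Matrix.mul_smul, e3, Matrix.mul_sub, ih, Matrix.mul_smul, e2]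
        simp
      ext1 i j
      have := congrFun (congrFun h2 i) j
      simpa using this
  rw [← hH0]
  ext i j
  have := congrArg (eval 0) (congrFun (congrFun (hind k) i) j)
  simpa [Matrix.mul_apply, eval_finsetSum, hc] using this

lemma aux_isUnit {n m : ℕ} (A Q : Matrix (Fin n) (Fin n) ℝ) (C : Matrix (Fin m) (Fin n) ℝ)
    (hobs : Observable A C) (hQ : Q.IsSymm) (hst : Aᵀ * Q * A - Q = Cᵀ * C) : IsUnit Q := by
  rw [Matrix.isUnit_iff_isUnit_det, isUnit_iff_ne_zero]
  intro hdet
  obtain ⟨v, hv0, hv⟩ := Matrix.exists_mulVec_eq_zero_iff.mpr hdet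
  apply hv0
  apply hobs
  intro k _
  set f : ℝ →+* ℂ := Complex.ofRealHom with hf
  have hstar : ∀ {a b : ℕ} (M : Matrix (Fin a) (Fin b) ℝ), (M.map f)ᴴ = Mᵀ.map f := by
    intro a b M; ext i j; simp [hf]
  set V : Matrix (Fin n) Unit ℝ := Matrix.of (fun i _ => v i) with hV
  have hQV : Q * V = 0 := by
    ext i j
    have := congrFun hv i
    simpa [Matrix.mul_apply, Matrix.mulVec, dotProduct, hV] using this
  have := aux_key (A.map f) (Q.map f) (C.map f) (V.map f)
    (by rw [hstar, hQ]) (by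
      rw [hstar, hstar, ← Matrix.map_mul, ← Matrix.map_mul, ← Matrix.map_mul, ← hst]
      ext i j; simp only [Matrix.sub_apply, Matrix.map_apply, map_sub]) (by rw [← Matrix.map_mul, hQV]; ext i j; simp) k
  have e : (C * A ^ k * V).map f = 0 := by
    rw [← this, Matrix.map_mul, Matrix.map_mul]
    congr 2
    exact map_pow f.mapMatrix A k
  ext i
  have := congrFun (congrFun e i) ()
  simp only [Matrix.map_apply, Matrix.zero_apply, hf, Complex.ofRealHom_eq_coe, Complex.ofReal_eq_zero] at this
  simpa [Matrix.mul_apply, Matrix.mulVec, dotProduct, hV] using this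

lemma aux_max {n : ℕ} (Q : Matrix (Fin n) (Fin n) ℝ) :
    ∃ P : Submodule ℝ (Fin n → ℝ), (∀ x ∈ P, 0 ≤ x ⬝ᵥ Q *ᵥ x) ∧
      ∀ P' : Submodule ℝ (Fin n → ℝ), (∀ x ∈ P', 0 ≤ x ⬝ᵥ Q *ᵥ x) →
        Module.finrank ℝ P' ≤ Module.finrank ℝ P := by
  classical
  let R : ℕ → Prop := fun k => ∃ P : Submodule ℝ (Fin n → ℝ), (∀ x ∈ P, 0 ≤ x ⬝ᵥ Q *ᵥ x) ∧
    Module.finrank ℝ P = k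
  have h0 : R 0 := ⟨⊥, by intro x hx; simp [(Submodule.mem_bot ℝ).mp hx], by simp⟩
  obtain ⟨P, hP, hk⟩ := Nat.findGreatest_spec (P := R) (Nat.zero_le n) h0
  refine ⟨P, hP, fun P' hP' => ?_⟩
  rw [hk]
  apply Nat.le_findGreatest
  · simpa using Submodule.finrank_le P'
  · exact ⟨P', hP', rfl⟩

lemma aux_pos {n m : ℕ} (A Q : Matrix (Fin n) (Fin n) ℝ) (C : Matrix (Fin m) (Fin n) ℝ)
    (hQ : Q.IsSymm) (hU : IsUnit Q) (hst : Aᵀ * Q * A - Q = Cᵀ * C)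
    (b : Fin n → ℝ) (d : Fin m → ℝ) (hbd : Cᵀ *ᵥ d = (Aᵀ * Q) *ᵥ b) (hne : b ≠ 0 ∨ d ≠ 0) :
    0 < d ⬝ᵥ d - b ⬝ᵥ Q *ᵥ b := by
  by_contra hcon
  push Not at hcon
  obtain ⟨P, hP, hmax⟩ := aux_max Q
  let f : (P × ℝ) →ₗ[ℝ] (Fin n → ℝ) :=
    (A.mulVecLin.comp P.subtype).coprod (LinearMap.toSpanSingleton ℝ _ b)
  have hf : ∀ x a, f (x, a) = A *ᵥ (x : Fin n → ℝ) + a • b := by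
    intro x a; simp [f]
  have hsymm : ∀ x y : Fin n → ℝ, x ⬝ᵥ Q *ᵥ y = y ⬝ᵥ Q *ᵥ x := by
    intro x y
    rw [dotProduct_mulVec, ← mulVec_transpose, hQ, dotProduct_comm]
  have hE : ∀ x : Fin n → ℝ, (A *ᵥ x) ⬝ᵥ Q *ᵥ (A *ᵥ x) = x ⬝ᵥ Q *ᵥ x + (C *ᵥ x) ⬝ᵥ (C *ᵥ x) := by
    intro x
    have h := congrArg (fun M => x ⬝ᵥ M *ᵥ x) hst
    simp only [sub_mulVec, dotProduct_sub, ← mulVec_mulVec] at h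
    have e1 : ∀ (w : Fin n → ℝ), x ⬝ᵥ Aᵀ *ᵥ w = (A *ᵥ x) ⬝ᵥ w := by
      intro w; rw [dotProduct_mulVec, vecMul_transpose]
    have e2 : ∀ (w : Fin m → ℝ), x ⬝ᵥ Cᵀ *ᵥ w = (C *ᵥ x) ⬝ᵥ w := by
      intro w; rw [dotProduct_mulVec, vecMul_transpose]
    rw [e1, e2] at h
    linarith
  have hX : ∀ x : Fin n → ℝ, (A *ᵥ x) ⬝ᵥ Q *ᵥ b = (C *ᵥ x) ⬝ᵥ d := by
    intro x
    have h := congrArg (fun w => x ⬝ᵥ w) hbd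
    simp only [← mulVec_mulVec] at h
    rw [dotProduct_mulVec, vecMul_transpose, dotProduct_mulVec x, vecMul_transpose] at h
    exact h.symm
  have hform : ∀ (x : Fin n → ℝ) (a : ℝ), (A *ᵥ x + a • b) ⬝ᵥ Q *ᵥ (A *ᵥ x + a • b) =
      x ⬝ᵥ Q *ᵥ x + (C *ᵥ x + a • d) ⬝ᵥ (C *ᵥ x + a • d) - a ^ 2 * (d ⬝ᵥ d - b ⬝ᵥ Q *ᵥ b) := by
    intro x a
    simp only [mulVec_add, mulVec_smul, dotProduct_add, add_dotProduct, smul_dotProduct,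
      dotProduct_smul, smul_eq_mul]
    rw [hE, hsymm b, hX, dotProduct_comm d (C *ᵥ x)]
    ring
  have hsq : ∀ w : Fin m → ℝ, 0 ≤ w ⬝ᵥ w := fun w => by
    simpa using dotProduct_star_self_nonneg w
  have hnn : ∀ (x : P) (a : ℝ), 0 ≤ f (x, a) ⬝ᵥ Q *ᵥ f (x, a) := by
    intro x a
    rw [hf, hform]
    have h1 := hP x x.2
    have h2 := hsq (C *ᵥ (x : Fin n → ℝ) + a • d)
    nlinarith [mul_nonneg (sq_nonneg a) (neg_nonneg.mpr hcon)]
  have hinj : Function.Injective f := by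
    rw [injective_iff_map_eq_zero]
    rintro ⟨x, a⟩ h0
    have h3 : f (x, a) ⬝ᵥ Q *ᵥ f (x, a) = 0 := by rw [h0]; simp
    rw [hf] at h0
    rw [hf, hform] at h3
    have h1 := hP x x.2
    have h2 := hsq (C *ᵥ (x : Fin n → ℝ) + a • d)
    have h4 : (C *ᵥ (x : Fin n → ℝ) + a • d) ⬝ᵥ (C *ᵥ (x : Fin n → ℝ) + a • d) = 0 := by
      nlinarith [mul_nonneg (sq_nonneg a) (neg_nonneg.mpr hcon)]
    have h5 : C *ᵥ (x : Fin n → ℝ) + a • d = 0 := dotProduct_self_eq_zero.mp h4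
    have h6 : Q *ᵥ (x : Fin n → ℝ) = 0 := by
      have e : Q = Aᵀ * Q * A - Cᵀ * C := by rw [← hst]; abel
      rw [e, sub_mulVec, ← mulVec_mulVec, ← mulVec_mulVec _ Cᵀ, eq_neg_of_add_eq_zero_left h0,
        eq_neg_of_add_eq_zero_left h5, mulVec_neg, mulVec_neg, mulVec_smul, mulVec_smul, hbd]
      simp
    have h7 : (x : Fin n → ℝ) = 0 :=
      (Matrix.mulVec_injective_iff_isUnit.mpr hU) (by rw [h6, mulVec_zero])
    rw [h7, mulVec_zero, zero_add] at h0 h5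
    have ha : a = 0 := by
      rcases hne with h | h
      · exact (smul_eq_zero.mp h0).resolve_right h
      · exact (smul_eq_zero.mp h5).resolve_right h
    ext1
    · exact Subtype.ext h7
    · exact ha
  have hr := hmax (LinearMap.range f) (by rintro _ ⟨⟨x, a⟩, rfl⟩; exact hnn x a)
  rw [LinearMap.finrank_range_of_inj hinj] at hr
  simp at hr

lemma aux_exists {n m : ℕ} (A Q : Matrix (Fin n) (Fin n) ℝ) (C : Matrix (Fin m) (Fin n) ℝ)
    (hQ : Q.IsSymm) (hU : IsUnit Q) (hst : Aᵀ * Q * A - Q = Cᵀ * C) :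
    ∃ (B : Matrix (Fin n) (Fin m) ℝ) (D : Matrix (Fin m) (Fin m) ℝ),
      Cᵀ * D = Aᵀ * Q * B ∧ Dᵀ * D - Bᵀ * Q * B = 1 := by
  let g : ((Fin n → ℝ) × (Fin m → ℝ)) →ₗ[ℝ] (Fin n → ℝ) :=
    (Aᵀ * Q).mulVecLin.coprod (-(Cᵀ).mulVecLin)
  have hdim : m ≤ Module.finrank ℝ (LinearMap.ker g) := by
    have h1 := LinearMap.finrank_range_add_finrank_ker g
    have h2 := Submodule.finrank_le (LinearMap.range g)
    simp at h1 h2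
    omega
  obtain ⟨w, hw⟩ := exists_linearIndependent_of_le_finrank hdim
  let B0 : Matrix (Fin n) (Fin m) ℝ := Matrix.of fun i j => (w j).1.1 i
  let D0 : Matrix (Fin m) (Fin m) ℝ := Matrix.of fun i j => (w j).1.2 i
  have hsumB : ∀ y : Fin m → ℝ, B0 *ᵥ y = (∑ j, y j • (w j).1).1 := by
    intro y; ext i
    simp [B0, mulVec, dotProduct, Prod.fst_sum, mul_comm]
  have hsumD : ∀ y : Fin m → ℝ, D0 *ᵥ y = (∑ j, y j • (w j).1).2 := by
    intro y; ext i
    simp [D0, mulVec, dotProduct, Prod.snd_sum, mul_comm]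
  have hrel : ∀ y : Fin m → ℝ, Cᵀ *ᵥ (D0 *ᵥ y) = (Aᵀ * Q) *ᵥ (B0 *ᵥ y) := by
    intro y
    have : g (∑ j, y j • (w j).1) = 0 := by
      rw [map_sum]
      apply Finset.sum_eq_zero
      intro j _
      rw [map_smul, (w j).2, smul_zero]
    rw [hsumB, hsumD]
    simp only [g, LinearMap.coprod_apply, LinearMap.neg_apply, mulVecLin_apply] at this
    rw [← sub_eq_add_neg, sub_eq_zero] at this
    exact this.symm
  have hrelM : Cᵀ * D0 = Aᵀ * Q * B0 := by
    apply Matrix.ext_of_mulVec_single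
    intro i
    rw [← mulVec_mulVec, hrel, mulVec_mulVec]
  have hpd : (D0ᵀ * D0 - B0ᵀ * Q * B0).PosDef := by
    apply PosDef.of_dotProduct_mulVec_pos
    · rw [Matrix.IsHermitian, conjTranspose_eq_transpose_of_trivial]
      simp only [transpose_sub, transpose_mul, transpose_transpose, hQ.eq, Matrix.mul_assoc]
    · intro y hy
      have hp := aux_pos A Q C hQ hU hst (B0 *ᵥ y) (D0 *ᵥ y) (hrel y) (by
        by_contra hcon
        push Not at hcon
        rw [hsumB, hsumD] at hcon
        have hz : ∑ j, y j • w j = 0 := by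
          apply Subtype.ext
          rw [Submodule.coe_sum]
          exact Prod.ext hcon.1 hcon.2
        exact hy (funext (Fintype.linearIndependent_iff.mp hw y hz)))
      have e : star y ⬝ᵥ (D0ᵀ * D0 - B0ᵀ * Q * B0) *ᵥ y =
          (D0 *ᵥ y) ⬝ᵥ (D0 *ᵥ y) - (B0 *ᵥ y) ⬝ᵥ Q *ᵥ (B0 *ᵥ y) := by
        simp only [star_trivial, sub_mulVec, dotProduct_sub, ← mulVec_mulVec]
        rw [dotProduct_mulVec y, vecMul_transpose, dotProduct_mulVec y, vecMul_transpose]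
      rw [e]; exact hp
  obtain ⟨R, hR⟩ : ∃ R : Matrix (Fin m) (Fin m) ℝ, D0ᵀ * D0 - B0ᵀ * Q * B0 = Rᵀ * R := by
    open scoped MatrixOrder ComplexOrder in
    obtain ⟨R, hR⟩ := CStarAlgebra.nonneg_iff_eq_star_mul_self.mp hpd.posSemidef.nonneg
    exact ⟨R, hR⟩
  have hRu : IsUnit R.det := by
    have h1 := (Matrix.isUnit_iff_isUnit_det _).mp hpd.isUnit
    rw [hR, det_mul] at h1
    exact isUnit_of_mul_isUnit_right h1
  refine ⟨B0 * R⁻¹, D0 * R⁻¹, ?_, ?_⟩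
  · rw [← Matrix.mul_assoc, hrelM, Matrix.mul_assoc]
  · have : (D0 * R⁻¹)ᵀ * (D0 * R⁻¹) - (B0 * R⁻¹)ᵀ * Q * (B0 * R⁻¹)
        = (R⁻¹)ᵀ * (D0ᵀ * D0 - B0ᵀ * Q * B0) * R⁻¹ := by
      simp only [transpose_mul, Matrix.mul_sub, Matrix.sub_mul, Matrix.mul_assoc]
    rw [this, hR, ← Matrix.mul_assoc, ← transpose_mul, Matrix.mul_nonsing_inv _ hRu,
      transpose_one, Matrix.one_mul, Matrix.mul_nonsing_inv _ hRu]

lemma aux_dual {n m : ℕ} (A Q : Matrix (Fin n) (Fin n) ℝ) (C : Matrix (Fin m) (Fin n) ℝ)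
    (B : Matrix (Fin n) (Fin m) ℝ) (D : Matrix (Fin m) (Fin m) ℝ)
    (hQ : Q.IsSymm) (hU : IsUnit Q) (hst : Aᵀ * Q * A - Q = Cᵀ * C)
    (h1 : Cᵀ * D = Aᵀ * Q * B) (h2 : Dᵀ * D - Bᵀ * Q * B = 1) :
    A * Q⁻¹ * Aᵀ - Q⁻¹ = B * Bᵀ ∧ A * Q⁻¹ * Cᵀ = B * Dᵀ ∧ C * Q⁻¹ * Aᵀ = D * Bᵀ ∧
      1 + C * Q⁻¹ * Cᵀ = D * Dᵀ := by
  have hd : IsUnit Q.det := (Matrix.isUnit_iff_isUnit_det _).mp hU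
  have hPQ : Q⁻¹ * Q = 1 := Matrix.nonsing_inv_mul _ hd
  have hQP : Q * Q⁻¹ = 1 := Matrix.mul_nonsing_inv _ hd
  have h1' : Dᵀ * C = Bᵀ * Q * A := by
    have := congrArg transpose h1
    simpa only [transpose_mul, transpose_transpose, hQ.eq, Matrix.mul_assoc] using this
  have hLW : fromBlocks (Q⁻¹ * Aᵀ * Q) (-(Q⁻¹ * Cᵀ)) (-(Bᵀ * Q)) Dᵀ * fromBlocks A B C D = 1 := by
    rw [fromBlocks_multiply, ← fromBlocks_one]
    congr 1
    · have : Q⁻¹ * Aᵀ * Q * A + -(Q⁻¹ * Cᵀ) * C = Q⁻¹ * (Aᵀ * Q * A - Cᵀ * C) := by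
        rw [Matrix.mul_sub, Matrix.neg_mul, ← sub_eq_add_neg]; simp only [Matrix.mul_assoc]
      rw [this, ← hst, sub_sub_cancel, hPQ]
    · have : Q⁻¹ * Aᵀ * Q * B + -(Q⁻¹ * Cᵀ) * D = Q⁻¹ * (Aᵀ * Q * B - Cᵀ * D) := by
        rw [Matrix.mul_sub, Matrix.neg_mul, ← sub_eq_add_neg]; simp only [Matrix.mul_assoc]
      rw [this, h1, sub_self, Matrix.mul_zero]
    · rw [h1', Matrix.neg_mul, neg_add_cancel]
    · rw [← h2, Matrix.neg_mul, add_comm, ← sub_eq_add_neg]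
  have hWL := mul_eq_one_comm.mp hLW
  rw [fromBlocks_multiply, ← fromBlocks_one, fromBlocks_inj] at hWL
  obtain ⟨k1, k2, k3, k4⟩ := hWL
  refine ⟨?_, ?_, ?_, ?_⟩
  · have := congrArg (· * Q⁻¹) k1
    simp only [Matrix.add_mul, Matrix.mul_neg, Matrix.neg_mul, Matrix.mul_assoc, hQP, Matrix.mul_one,
      Matrix.one_mul] at this
    rw [Matrix.mul_assoc, sub_eq_iff_eq_add, ← sub_eq_iff_eq_add', sub_eq_add_neg]; exact this
  · rw [Matrix.mul_neg, neg_add_eq_zero, ← Matrix.mul_assoc] at k2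
    exact k2
  · have := congrArg (· * Q⁻¹) k3
    simp only [Matrix.add_mul, Matrix.mul_neg, Matrix.neg_mul, Matrix.mul_assoc, hQP, Matrix.mul_one,
      Matrix.zero_mul] at this
    rw [← sub_eq_add_neg, sub_eq_zero] at this
    simpa only [Matrix.mul_assoc] using this
  · rw [← k4, Matrix.mul_neg, Matrix.mul_assoc]; abel

lemma aux_allpass {n m : ℕ} (A P : Matrix (Fin n) (Fin n) ℝ) (C : Matrix (Fin m) (Fin n) ℝ)
    (B : Matrix (Fin n) (Fin m) ℝ) (D : Matrix (Fin m) (Fin m) ℝ)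
    (h1 : A * P * Aᵀ - P = B * Bᵀ) (h2 : A * P * Cᵀ = B * Dᵀ) (h3 : C * P * Aᵀ = D * Bᵀ)
    (h4 : 1 + C * P * Cᵀ = D * Dᵀ) : AllPass A B C D := by
  intro z hz hu1 hu2
  set S := z • (1 : Matrix (Fin n) (Fin n) ℝ) - A with hS
  set T := z⁻¹ • (1 : Matrix (Fin n) (Fin n) ℝ) - Aᵀ with hT
  have hSS : S⁻¹ * S = 1 := Matrix.nonsing_inv_mul _ ((Matrix.isUnit_iff_isUnit_det _).mp hu1)
  have hTT : T * T⁻¹ = 1 := Matrix.mul_nonsing_inv _ ((Matrix.isUnit_iff_isUnit_det _).mp hu2)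
  have hzero : (A * P * Aᵀ - P) + A * P * T + S * P * Aᵀ + S * P * T = 0 := by
    simp only [hS, hT, Matrix.mul_sub, Matrix.sub_mul, Matrix.smul_mul, Matrix.mul_smul,
      Matrix.one_mul, Matrix.mul_one, smul_sub, smul_smul]
    rw [inv_mul_cancel₀ hz, one_smul]
    abel
  have hb : S⁻¹ * (A * P * Aᵀ - P) * T⁻¹ + S⁻¹ * (A * P) + P * Aᵀ * T⁻¹ + P = 0 := by
    have := congrArg (fun M => S⁻¹ * M * T⁻¹) hzero
    simp only [Matrix.mul_add, Matrix.add_mul, Matrix.mul_zero, Matrix.zero_mul] at this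
    have e1 : S⁻¹ * (A * P * T) * T⁻¹ = S⁻¹ * (A * P) := by
      rw [Matrix.mul_assoc, Matrix.mul_assoc (A * P), hTT, Matrix.mul_one]
    have e2 : S⁻¹ * (S * P * Aᵀ) * T⁻¹ = P * Aᵀ * T⁻¹ := by
      rw [Matrix.mul_assoc S, ← Matrix.mul_assoc S⁻¹, hSS, Matrix.one_mul]
    have e3 : S⁻¹ * (S * P * T) * T⁻¹ = P := by
      rw [Matrix.mul_assoc S, ← Matrix.mul_assoc S⁻¹, hSS, Matrix.one_mul, Matrix.mul_assoc, hTT,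
        Matrix.mul_one]
    rw [e1, e2, e3] at this
    exact this
  have : (C * S⁻¹ * B + D) * (Bᵀ * T⁻¹ * Cᵀ + Dᵀ) =
      C * S⁻¹ * (B * Bᵀ) * T⁻¹ * Cᵀ + C * S⁻¹ * (B * Dᵀ) + (D * Bᵀ) * T⁻¹ * Cᵀ + D * Dᵀ := by
    simp only [Matrix.mul_add, Matrix.add_mul, Matrix.mul_assoc]; abel
  rw [this, ← h1, ← h2, ← h3, ← h4]
  have e : C * S⁻¹ * (A * P * Aᵀ - P) * T⁻¹ * Cᵀ + C * S⁻¹ * (A * P * Cᵀ) + C * P * Aᵀ * T⁻¹ * Cᵀ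
      + (1 + C * P * Cᵀ) =
      1 + C * (S⁻¹ * (A * P * Aᵀ - P) * T⁻¹ + S⁻¹ * (A * P) + P * Aᵀ * T⁻¹ + P) * Cᵀ := by
    simp only [Matrix.mul_add, Matrix.add_mul, Matrix.mul_assoc]; abel
  rw [e, hb]; simp

lemma aux_pow {n : ℕ} (A : Matrix (Fin n) (Fin n) ℝ) (hn : 0 < n) (k : ℕ) :
    ∃ c : ℕ → ℝ, A ^ k = ∑ i ∈ Finset.range n, c i • A ^ i := by
  have : Nonempty (Fin n) := ⟨⟨0, hn⟩⟩
  refine ⟨fun i => (Polynomial.X ^ k %ₘ A.charpoly).coeff i, ?_⟩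
  rw [Matrix.pow_eq_aeval_mod_charpoly A k]
  apply Polynomial.aeval_eq_sum_range'
  have h := Polynomial.natDegree_modByMonic_lt (Polynomial.X ^ k) A.charpoly_monic (by
    intro h
    have := A.charpoly_natDegree_eq_dim
    rw [h] at this
    simp at this
    omega)
  simpa [A.charpoly_natDegree_eq_dim] using h

lemma aux_reach {n m : ℕ} (A P : Matrix (Fin n) (Fin n) ℝ) (C : Matrix (Fin m) (Fin n) ℝ)
    (B : Matrix (Fin n) (Fin m) ℝ) (D : Matrix (Fin m) (Fin m) ℝ) (hobs : Observable A C)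
    (hP : IsUnit P)
    (h1 : A * P * Aᵀ - P = B * Bᵀ) (h3 : C * P * Aᵀ = D * Bᵀ) : Reachable A B := by
  rcases Nat.eq_zero_or_pos n with hn | hn
  · subst hn
    exact Subsingleton.elim _ _
  by_contra hcon
  obtain ⟨φ, hφ0, hφ⟩ := Submodule.exists_le_ker_of_lt_top _ (lt_top_iff_ne_top.mpr hcon)
  -- the vector representing φ
  let v : Fin n → ℝ := fun i => φ (Pi.single i 1)
  have hv : ∀ x, φ x = v ⬝ᵥ x := by
    intro x
    conv_lhs => rw [← Finset.univ_sum_single x]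
    rw [map_sum]
    apply Finset.sum_congr rfl
    intro i _
    have : (Pi.single i (x i) : Fin n → ℝ) = x i • Pi.single i 1 := by
      rw [← Pi.single_smul]; simp
    rw [this, map_smul, smul_eq_mul, mul_comm]
  have hlow : ∀ k < n, Bᵀ *ᵥ ((Aᵀ) ^ k *ᵥ v) = 0 := by
    intro k hk
    ext j
    have h0 : φ ((A ^ k) *ᵥ (fun i => B i j)) = 0 :=
      hφ (Submodule.subset_span ⟨k, by simpa using hk, j, rfl⟩)
    rw [hv, dotProduct_mulVec, ← mulVec_transpose, transpose_pow] at h0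
    rw [Pi.zero_apply, ← h0, dotProduct_comm]
    rfl
  have hall : ∀ k, Bᵀ *ᵥ ((Aᵀ) ^ k *ᵥ v) = 0 := by
    intro k
    obtain ⟨c, hc⟩ := aux_pow Aᵀ hn k
    rw [hc, sum_mulVec, mulVec_sum]
    apply Finset.sum_eq_zero
    intro i hi
    rw [smul_mulVec, mulVec_smul, hlow i (Finset.mem_range.mp hi), smul_zero]
  -- unobservable subspace
  let U : Submodule ℝ (Fin n → ℝ) := ⨅ k : ℕ, LinearMap.ker (Bᵀ * (Aᵀ) ^ k).mulVecLin
  have hUmem : ∀ x, x ∈ U ↔ ∀ k, Bᵀ *ᵥ ((Aᵀ) ^ k *ᵥ x) = 0 := by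
    intro x
    simp only [U, Submodule.mem_iInf, LinearMap.mem_ker, mulVecLin_apply, mulVec_mulVec]
  have hUinv : ∀ x ∈ U, Aᵀ *ᵥ x ∈ U := by
    intro x hx
    rw [hUmem] at hx ⊢
    intro k
    have := hx (k + 1)
    rwa [pow_succ, ← mulVec_mulVec] at this
  have hUB : ∀ x ∈ U, Bᵀ *ᵥ x = 0 := by
    intro x hx
    simpa using (hUmem x).mp hx 0
  have hAP : ∀ x ∈ U, A *ᵥ (P *ᵥ (Aᵀ *ᵥ x)) = P *ᵥ x := by
    intro x hx
    have := congrArg (fun M => M *ᵥ x) h1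
    simp only [sub_mulVec, ← mulVec_mulVec, hUB x hx, mulVec_zero] at this
    exact sub_eq_zero.mp this
  have hCP : ∀ x ∈ U, C *ᵥ (P *ᵥ (Aᵀ *ᵥ x)) = 0 := by
    intro x hx
    have := congrArg (fun M => M *ᵥ x) h3
    simpa only [← mulVec_mulVec, hUB x hx, mulVec_zero] using this
  have hPinj := Matrix.mulVec_injective_iff_isUnit.mpr hP
  let a : U →ₗ[ℝ] U := (Aᵀ).mulVecLin.restrict hUinv
  have ha : ∀ x : U, ((a x : U) : Fin n → ℝ) = Aᵀ *ᵥ (x : Fin n → ℝ) := fun x => rfl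
  have hainj : Function.Injective a := by
    rw [injective_iff_map_eq_zero]
    intro x hx
    have h0 : Aᵀ *ᵥ (x : Fin n → ℝ) = 0 := by rw [← ha, hx]; rfl
    have := hAP x x.2
    rw [h0, mulVec_zero, mulVec_zero] at this
    apply Subtype.ext
    exact hPinj (by rw [← this]; simp)
  have hasurj : Function.Surjective a := LinearMap.injective_iff_surjective.mp hainj
  have hfin : ∀ k : ℕ, ∀ x : U, (C * A ^ k) *ᵥ (P *ᵥ (x : Fin n → ℝ)) = 0 := by
    intro k
    induction k with
    | zero =>
      intro x
      obtain ⟨y, rfl⟩ := hasurj x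
      simpa [ha] using hCP y y.2
    | succ k ih =>
      intro x
      obtain ⟨y, rfl⟩ := hasurj x
      rw [pow_succ, ← Matrix.mul_assoc, ← mulVec_mulVec, ha, hAP y y.2]
      exact ih y
  have hvU : v ∈ U := (hUmem v).mpr hall
  have hPv : P *ᵥ v = 0 := hobs _ (fun k _ => hfin k ⟨v, hvU⟩)
  have hv0 : v = 0 := hPinj (by rw [hPv, mulVec_zero])
  apply hφ0
  apply LinearMap.ext
  intro x
  rw [hv, hv0]; simp

theorem stein_iff_allpass_completion_dual
    (n m : ℕ) (A : Matrix (Fin n) (Fin n) ℝ) (C : Matrix (Fin m) (Fin n) ℝ)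
    (hobs : Observable A C)
    (Q : Matrix (Fin n) (Fin n) ℝ) (hQsymm : Q.IsSymm) :
    (Aᵀ * Q * A - Q = Cᵀ * C ↔
      ∃ (B : Matrix (Fin n) (Fin m) ℝ) (D : Matrix (Fin m) (Fin m) ℝ),
        Reachable A B ∧ AllPass A B C D ∧
        Aᵀ * Q * A - Q = Cᵀ * C ∧ Cᵀ * D = Aᵀ * Q * B ∧ Dᵀ * D - Bᵀ * Q * B = 1) ∧
    (Aᵀ * Q * A - Q = Cᵀ * C →
      IsUnit Q ∧ ((1 : Matrix (Fin m) (Fin m) ℝ) + C * Q⁻¹ * Cᵀ).PosSemidef) := by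
  refine ⟨⟨fun hst => ?_, fun ⟨B, D, _, _, h, _⟩ => h⟩, fun hst => ?_⟩
  · have hU := aux_isUnit A Q C hobs hQsymm hst
    obtain ⟨B, D, h1, h2⟩ := aux_exists A Q C hQsymm hU hst
    obtain ⟨k1, k2, k3, k4⟩ := aux_dual A Q C B D hQsymm hU hst h1 h2
    have hP : IsUnit Q⁻¹ := by
      rw [Matrix.isUnit_iff_isUnit_det] at hU ⊢
      exact Matrix.isUnit_nonsing_inv_det _ hU
    exact ⟨B, D, aux_reach A Q⁻¹ C B D hobs hP k1 k3, aux_allpass A Q⁻¹ C B D k1 k2 k3 k4,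
      hst, h1, h2⟩
  · have hU := aux_isUnit A Q C hobs hQsymm hst
    obtain ⟨B, D, h1, h2⟩ := aux_exists A Q C hQsymm hU hst
    obtain ⟨k1, k2, k3, k4⟩ := aux_dual A Q C B D hQsymm hU hst h1 h2
    refine ⟨hU, ?_⟩
    rw [k4]
    have := Matrix.posSemidef_self_mul_conjTranspose D
    rwa [conjTranspose_eq_transpose_of_trivial] at this
end
end

section
/- Let A ∈ ℝ^{n×n}, B ∈ ℝ^{n×m}, C ∈ ℝ^{m×n} be given. If there exist symmetric matrices P, Q ∈ ℝ^{n×n} such that A P Aᵀ − P = B Bᵀ, Aᵀ Q A − Q = Cᵀ C, and P Q = I, then there exists a matrix D ∈ ℝ^{m×m} such that the transfer function Q(z) = C(zI−A)⁻¹B + D is all-pass. -/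
open Matrix

noncomputable section

theorem aux_spectral {N : Type*} [Fintype N] [DecidableEq N] (Q : Matrix N N ℝ) (hQ : Q.IsHermitian) :
    ∃ V : Matrix N N ℝ, V * Vᵀ = 1 ∧ Vᵀ * V = 1 ∧ Q = V * diagonal hQ.eigenvalues * Vᵀ := by
  refine ⟨(hQ.eigenvectorUnitary : Matrix N N ℝ), ?_, ?_, ?_⟩
  · have := Unitary.coe_mul_star_self hQ.eigenvectorUnitary
    simpa [star_eq_conjTranspose] using this
  · have := Unitary.coe_star_mul_self hQ.eigenvectorUnitary
    simpa [star_eq_conjTranspose] using this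
  · have h := hQ.spectral_theorem
    rw [Unitary.conjStarAlgAut_apply] at h
    rw [star_eq_conjTranspose, conjTranspose_eq_transpose_of_trivial] at h
    exact h

theorem aux_factor {N : Type*} [Fintype N] [DecidableEq N] (m : ℕ) (G : Matrix N N ℝ)
    (hG : G.PosSemidef) (hr : G.rank ≤ m) : ∃ F : Matrix N (Fin m) ℝ, F * Fᵀ = G := by
  obtain ⟨V, -, -, hV⟩ := aux_spectral G hG.isHermitian
  set d := hG.isHermitian.eigenvalues with hd
  have hd0 : ∀ i, 0 ≤ d i := hG.eigenvalues_nonneg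
  rw [hG.isHermitian.rank_eq_card_non_zero_eigs] at hr
  have hr' : Fintype.card {i // d i ≠ 0} ≤ Fintype.card (Fin m) := by simpa using hr
  obtain ⟨σ⟩ := Function.Embedding.nonempty_of_card_le hr'
  let R : Matrix N (Fin m) ℝ := Matrix.of fun i k =>
    if h : d i ≠ 0 then (if σ ⟨i, h⟩ = k then Real.sqrt (d i) else 0) else 0
  have hR : R * Rᵀ = diagonal d := by
    ext i j
    rw [mul_apply]
    simp only [transpose_apply, R, of_apply]
    by_cases hi : d i ≠ 0
    · by_cases hj : d j ≠ 0
      · simp only [hi, hj, dif_pos, not_false_eq_true, ne_eq]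
        by_cases hij : i = j
        · subst hij
          simp [Real.mul_self_sqrt (hd0 i)]
        · have : σ ⟨i, hi⟩ ≠ σ ⟨j, hj⟩ := fun h => hij (by simpa using σ.injective h)
          simp [hij, this, Ne.symm this]
      · have hij : i ≠ j := by rintro rfl; exact hj hi
        simp [hj, hij]
    · rw [not_not] at hi
      by_cases hij : i = j
      · subst hij; simp [hi]
      · simp [hi, hij]
  refine ⟨V * R, ?_⟩
  rw [transpose_mul, Matrix.mul_assoc, ← Matrix.mul_assoc R, hR, ← Matrix.mul_assoc, ← hV]

theorem aux_rot {n m : ℕ} (X Y : Matrix (Fin n) (Fin m) ℝ) (h : X * Xᵀ = Y * Yᵀ) :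
    ∃ U : Matrix (Fin m) (Fin m) ℝ, U * Uᵀ = 1 ∧ X = Y * U := by
  let f := toEuclideanLin Yᵀ
  let g := toEuclideanLin Xᵀ
  have key : ∀ (Z : Matrix (Fin n) (Fin m) ℝ) (x : EuclideanSpace ℝ (Fin n)),
      ‖toEuclideanLin Zᵀ x‖ ^ 2 = x.ofLp ⬝ᵥ ((Z * Zᵀ) *ᵥ x.ofLp) := by
    intro Z x
    rw [EuclideanSpace.real_norm_sq_eq, ← mulVec_mulVec, dotProduct_mulVec, ← mulVec_transpose]
    simp [dotProduct, pow_two]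
  have hn : ∀ x, ‖f x‖ = ‖g x‖ := by
    intro x
    rw [← sq_eq_sq₀ (norm_nonneg _) (norm_nonneg _), key, key, h]
  obtain ⟨s, hs⟩ := LinearMap.exists_rightInverse_of_surjective f.rangeRestrict
    (LinearMap.range_rangeRestrict f)
  have hs' : ∀ y, f (s y) = y := fun y => congrArg Subtype.val (LinearMap.congr_fun hs y)
  let φ : LinearMap.range f →ₗᵢ[ℝ] EuclideanSpace ℝ (Fin m) :=
    { toLinearMap := g ∘ₗ s
      norm_map' := fun y => by
        change ‖g (s y)‖ = ‖y‖
        rw [← hn, hs']; rfl }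
  let L := φ.extend
  have hL : ∀ x, L (f x) = g x := by
    intro x
    have h1 : L (f x) = φ ⟨f x, LinearMap.mem_range_self f x⟩ :=
      φ.extend_apply ⟨f x, LinearMap.mem_range_self f x⟩
    rw [h1]
    change g (s _) = g x
    rw [← sub_eq_zero, ← map_sub, ← norm_eq_zero, ← hn, map_sub, hs', sub_self, norm_zero]
  let M : Matrix (Fin m) (Fin m) ℝ := toEuclideanLin.symm L.toLinearMap
  have hM : ∀ x, toEuclideanLin M x = L x := by
    intro x
    simp [M]
  have hMM : Mᵀ * M = 1 := by
    ext i j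
    have h1 := L.inner_map_map (EuclideanSpace.single i (1:ℝ)) (EuclideanSpace.single j (1:ℝ))
    rw [← hM, ← hM] at h1
    simp [EuclideanSpace.inner_eq_star_dotProduct, toLpLin_apply] at h1
    rw [mul_apply, one_apply]
    rw [dotProduct_comm, Pi.single_apply] at h1
    exact h1
  refine ⟨Mᵀ, by simpa using hMM, ?_⟩
  have h2 : Xᵀ = M * Yᵀ := by
    apply toEuclideanLin.injective
    ext1 x
    change g x = _
    rw [← hL, ← hM]
    simp [f, toLpLin_apply, mulVec_mulVec]
  rw [← transpose_transpose X, h2, transpose_mul, transpose_transpose]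

theorem aux_inertia {n m : ℕ} (A : Matrix (Fin n) (Fin n) ℝ) (C : Matrix (Fin m) (Fin n) ℝ)
    (Q : Matrix (Fin n) (Fin n) ℝ) (hQsymm : Q.IsSymm) (hdet : IsUnit Q)
    (hQ : Aᵀ * Q * A - Q = Cᵀ * C) (u : Fin n → ℝ) (v : Fin m → ℝ)
    (huv : Aᵀ *ᵥ (Q *ᵥ u) = Cᵀ *ᵥ v) : u ⬝ᵥ (Q *ᵥ u) ≤ v ⬝ᵥ v := by
  by_contra! hlt
  have hH : Q.IsHermitian := by
    rw [IsHermitian, conjTranspose_eq_transpose_of_trivial]; exact hQsymm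
  obtain ⟨V, hV1, hV2, hV⟩ := aux_spectral Q hH
  set d := hH.eigenvalues
  have hd : ∀ i, d i ≠ 0 := by
    have h1 : Q.det ≠ 0 := ((isUnit_iff_isUnit_det Q).1 hdet).ne_zero
    rw [hH.det_eq_prod_eigenvalues] at h1
    intro i hi
    exact h1 (Finset.prod_eq_zero (Finset.mem_univ i) (by simpa using hi))
  have hquad : ∀ x : Fin n → ℝ, x ⬝ᵥ (Q *ᵥ x) = ∑ i, d i * ((Vᵀ *ᵥ x) i) ^ 2 := by
    intro x
    rw [hV, ← mulVec_mulVec, ← mulVec_mulVec, dotProduct_mulVec, ← mulVec_transpose]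
    simp only [dotProduct, mulVec_diagonal]
    exact Finset.sum_congr rfl fun i _ => by ring
  let S : Matrix (Fin n) (Fin n) ℝ := diagonal fun i => if d i < 0 then 1 else 0
  let T : ((Fin n → ℝ) × ℝ) →ₗ[ℝ] (Fin n → ℝ) :=
    { toFun := fun p i => if d i < 0 then (Vᵀ *ᵥ p.1) i else (Vᵀ *ᵥ (A *ᵥ p.1 + p.2 • u)) i
      map_add' := fun p q => by
        ext i
        simp only [Prod.fst_add, Prod.snd_add, mulVec_add, add_smul, Pi.add_apply]
        split_ifs <;> ring
      map_smul' := fun c p => by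
        ext i
        simp only [Prod.smul_fst, Prod.smul_snd, mulVec_add, mulVec_smul, Pi.add_apply,
          Pi.smul_apply, smul_eq_mul, RingHom.id_apply]
        split_ifs <;> ring }
  have hT : LinearMap.ker T ≠ ⊥ := by
    apply LinearMap.ker_ne_bot_of_finrank_lt
    simp
  obtain ⟨⟨e, c⟩, hec, hne⟩ := (Submodule.ne_bot_iff _).1 hT
  have hTi : ∀ i, (if d i < 0 then (Vᵀ *ᵥ e) i else (Vᵀ *ᵥ (A *ᵥ e + c • u)) i) = 0 :=
    fun i => congrFun (LinearMap.mem_ker.1 hec) i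
  have hterm : ∀ i, 0 ≤ d i * ((Vᵀ *ᵥ e) i) ^ 2 := by
    intro i
    have := hTi i
    split_ifs at this with hi
    · simp [this]
    · exact mul_nonneg (not_lt.1 hi) (sq_nonneg _)
  have hpos : 0 ≤ e ⬝ᵥ (Q *ᵥ e) := by
    rw [hquad]; exact Finset.sum_nonneg fun i _ => hterm i
  have hneg : (A *ᵥ e + c • u) ⬝ᵥ (Q *ᵥ (A *ᵥ e + c • u)) ≤ 0 := by
    rw [hquad]
    refine Finset.sum_nonpos fun i _ => ?_
    have := hTi i
    split_ifs at this with hi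
    · exact mul_nonpos_of_nonpos_of_nonneg hi.le (sq_nonneg _)
    · simp [this]
  have hvv : 0 ≤ (C *ᵥ e + c • v) ⬝ᵥ (C *ᵥ e + c • v) := by
    simp only [dotProduct]; exact Finset.sum_nonneg fun i _ => mul_self_nonneg _
  have h1 : (A *ᵥ e) ⬝ᵥ (Q *ᵥ u) = (C *ᵥ e) ⬝ᵥ v := by
    have := congrArg (fun w => e ⬝ᵥ w) huv
    simp only [dotProduct_mulVec, ← mulVec_transpose, transpose_transpose] at this ⊢
    simpa [dotProduct_mulVec, ← mulVec_transpose] using this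
  have h2 : u ⬝ᵥ (Q *ᵥ (A *ᵥ e)) = (A *ᵥ e) ⬝ᵥ (Q *ᵥ u) := by
    rw [dotProduct_mulVec, ← mulVec_transpose, hQsymm.eq, dotProduct_comm]
  have h3 : (A *ᵥ e) ⬝ᵥ (Q *ᵥ (A *ᵥ e)) - e ⬝ᵥ (Q *ᵥ e) = (C *ᵥ e) ⬝ᵥ (C *ᵥ e) := by
    have := congrArg (fun w => e ⬝ᵥ (w *ᵥ e)) hQ
    simp only [sub_mulVec, dotProduct_sub, ← mulVec_mulVec] at this
    rw [dotProduct_mulVec e Aᵀ, dotProduct_mulVec e Cᵀ, ← mulVec_transpose,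
      ← mulVec_transpose, transpose_transpose, transpose_transpose] at this
    exact this
  simp only [mulVec_add, mulVec_smul, dotProduct_add, add_dotProduct, smul_dotProduct,
    dotProduct_smul, smul_eq_mul] at hneg hvv
  rw [h2, h1] at hneg
  rw [dotProduct_comm v] at hvv
  have hc2 : c ^ 2 * (u ⬝ᵥ (Q *ᵥ u) - v ⬝ᵥ v) + e ⬝ᵥ (Q *ᵥ e) ≤ 0 := by nlinarith
  have hc : c = 0 := by
    by_contra hc
    have : 0 < c ^ 2 * (u ⬝ᵥ (Q *ᵥ u) - v ⬝ᵥ v) := mul_pos (by positivity) (by linarith)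
    linarith
  subst hc
  have he0 : ∑ i, d i * ((Vᵀ *ᵥ e) i) ^ 2 = 0 := by
    rw [← hquad]; apply le_antisymm _ hpos; simpa using hc2
  rw [Finset.sum_eq_zero_iff_of_nonneg (fun i _ => hterm i)] at he0
  have hVe : Vᵀ *ᵥ e = 0 := by
    ext i
    have := he0 i (Finset.mem_univ i)
    simpa [hd i] using this
  apply hne
  have : e = 0 := by
    rw [← one_mulVec e, ← hV1, ← mulVec_mulVec, hVe, mulVec_zero]
  simp [this]

theorem aux_exists_D
    (n m : ℕ) (A : Matrix (Fin n) (Fin n) ℝ) (B : Matrix (Fin n) (Fin m) ℝ)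
    (C : Matrix (Fin m) (Fin n) ℝ)
    (P Q : Matrix (Fin n) (Fin n) ℝ) (hPsymm : P.IsSymm) (hQsymm : Q.IsSymm)
    (hP : A * P * Aᵀ - P = B * Bᵀ) (hQ : Aᵀ * Q * A - Q = Cᵀ * C)
    (hPQ : P * Q = 1) :
    ∃ D : Matrix (Fin m) (Fin m) ℝ, B * Dᵀ = A * P * Cᵀ ∧ D * Dᵀ = 1 + C * P * Cᵀ := by
  have hQP : Q * P = 1 := mul_eq_one_comm.1 hPQ
  have hQu : IsUnit Q := IsUnit.of_mul_eq_one P hQP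
  let G := fromBlocks (A * P * Aᵀ - P) (A * P * Cᵀ) (C * P * Aᵀ) (1 + C * P * Cᵀ)
  have hGh : G.IsHermitian := by
    rw [IsHermitian, conjTranspose_eq_transpose_of_trivial]
    simp [G, fromBlocks_transpose, transpose_mul, hPsymm.eq, Matrix.mul_assoc]
  have hGp : G.PosSemidef := by
    refine .of_dotProduct_mulVec_nonneg hGh fun x => ?_
    obtain ⟨a, b, rfl⟩ : ∃ a b, x = Sum.elim a b := ⟨x ∘ Sum.inl, x ∘ Sum.inr, by simp⟩
    let s := P *ᵥ (Aᵀ *ᵥ a + Cᵀ *ᵥ b)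
    let u := A *ᵥ s - P *ᵥ a
    let v := C *ᵥ s + b
    have hGx : G *ᵥ Sum.elim a b = Sum.elim u v := by
      simp only [G, fromBlocks_mulVec, u, v, s, Sum.elim_comp_inl, Sum.elim_comp_inr]
      simp only [mulVec_add, sub_mulVec, add_mulVec, one_mulVec, ← mulVec_mulVec]
      congr 1 <;> abel
    have hQs : Q *ᵥ s = Aᵀ *ᵥ a + Cᵀ *ᵥ b := by
      simp only [s]; rw [mulVec_mulVec, hQP, one_mulVec]
    have hQu' : Q *ᵥ u = Q *ᵥ (A *ᵥ s) - a := by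
      simp only [u]; rw [mulVec_sub, mulVec_mulVec a, hQP, one_mulVec]
    have hAQ : Aᵀ *ᵥ (Q *ᵥ (A *ᵥ s)) = Q *ᵥ s + Cᵀ *ᵥ (C *ᵥ s) := by
      simp only [mulVec_mulVec]; rw [← add_mulVec, ← Matrix.mul_assoc, ← hQ]; simp
    have huv : Aᵀ *ᵥ (Q *ᵥ u) = Cᵀ *ᵥ v := by
      rw [hQu', mulVec_sub, hAQ, hQs]; simp only [v, mulVec_add]; abel
    have hin := aux_inertia A C Q hQsymm hQu hQ u v huv
    rw [hGx]
    have hst : star (Sum.elim a b) = Sum.elim a b := by simp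
    rw [hst, sumElim_dotProduct_sumElim]
    have e1 : (A *ᵥ s) ⬝ᵥ (Q *ᵥ u) = (C *ᵥ s) ⬝ᵥ v := by
      have := congrArg (fun w => s ⬝ᵥ w) huv
      rw [dotProduct_mulVec s Aᵀ, dotProduct_mulVec s Cᵀ, ← mulVec_transpose,
        ← mulVec_transpose, transpose_transpose, transpose_transpose] at this
      exact this
    have e2 : (P *ᵥ a) ⬝ᵥ (Q *ᵥ u) = a ⬝ᵥ u := by
      rw [dotProduct_mulVec, ← mulVec_transpose, hQsymm.eq, mulVec_mulVec, hQP, one_mulVec]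
    have e3 : u ⬝ᵥ (Q *ᵥ u) = (A *ᵥ s) ⬝ᵥ (Q *ᵥ u) - (P *ᵥ a) ⬝ᵥ (Q *ᵥ u) := by
      rw [← sub_dotProduct]
    have e4 : v ⬝ᵥ v = (C *ᵥ s) ⬝ᵥ v + b ⬝ᵥ v := by
      rw [← add_dotProduct]
    linarith
  have hGr : G.rank ≤ m := by
    have hLG : fromCols (Aᵀ * Q) (-Cᵀ) * G = 0 := by
      simp only [G]
      rw [fromCols_mul_fromBlocks]
      have t1 : Aᵀ * Q * A = Q + Cᵀ * C := by rw [← hQ]; simp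
      have t2 : ∀ {k : ℕ} (Z : Matrix (Fin n) (Fin k) ℝ),
          Aᵀ * Q * (A * P * Z) = Z + Cᵀ * (C * P * Z) := by
        intro k Z
        rw [← Matrix.mul_assoc, ← Matrix.mul_assoc, t1, Matrix.add_mul, hQP, Matrix.add_mul]
        simp [Matrix.mul_assoc]
      rw [Matrix.mul_sub, t2, t2, Matrix.mul_assoc Aᵀ Q P, hQP]
      have t3 : ∀ X Y : Matrix (Fin n) (Fin m) ℝ, X + Y + (-X + -Y) = 0 := by intros; abel
      simp [Matrix.mul_add, t3]
    have h1 := rank_add_rank_le_card_of_mul_eq_zero hLG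
    have h2 : fromCols (Aᵀ * Q) (-Cᵀ) * fromRows A C = Q := by
      rw [fromCols_mul_fromRows, ← sub_eq_zero]
      have := sub_eq_zero.2 hQ
      rw [← this]; simp; abel
    have h3 := rank_mul_le_left (fromCols (Aᵀ * Q) (-Cᵀ)) (fromRows A C)
    rw [h2, rank_of_isUnit Q hQu] at h3
    simp at h1 h3
    omega
  obtain ⟨F, hF⟩ := aux_factor m G hGp hGr
  rw [← fromRows_toRows F, transpose_fromRows, fromRows_mul_fromCols] at hF
  obtain ⟨f1, f2, f3, f4⟩ := fromBlocks_inj.1 hF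
  obtain ⟨U, hU, hB⟩ := aux_rot B F.toRows₁ (by rw [f1, hP])
  have hU' : ∀ Z : Matrix (Fin m) (Fin n) ℝ, U * (Uᵀ * Z) = Z := by
    intro Z; rw [← Matrix.mul_assoc, hU, Matrix.one_mul]
  refine ⟨F.toRows₂ * U, ?_, ?_⟩
  · rw [hB, transpose_mul, Matrix.mul_assoc, ← Matrix.mul_assoc U, hU, Matrix.one_mul, f2]
  · rw [transpose_mul, Matrix.mul_assoc, ← Matrix.mul_assoc U, hU, Matrix.one_mul, f4]

theorem stein_pair_implies_allpass
    (n m : ℕ) (A : Matrix (Fin n) (Fin n) ℝ) (B : Matrix (Fin n) (Fin m) ℝ)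
    (C : Matrix (Fin m) (Fin n) ℝ)
    (P Q : Matrix (Fin n) (Fin n) ℝ) (hPsymm : P.IsSymm) (hQsymm : Q.IsSymm)
    (hP : A * P * Aᵀ - P = B * Bᵀ) (hQ : Aᵀ * Q * A - Q = Cᵀ * C)
    (hPQ : P * Q = 1) :
    ∃ D : Matrix (Fin m) (Fin m) ℝ, AllPass A B C D := by
  obtain ⟨D, hBD, hDD⟩ := aux_exists_D n m A B C P Q hPsymm hQsymm hP hQ hPQ
  refine ⟨D, ?_⟩
  intro z hz h1 h2
  have hDB : D * Bᵀ = C * P * Aᵀ := by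
    have := congrArg transpose hBD
    simpa [transpose_mul, hPsymm.eq, Matrix.mul_assoc] using this
  rw [isUnit_iff_isUnit_det] at h1 h2
  have r1 := nonsing_inv_mul _ h1
  have r2 := mul_nonsing_inv _ h2
  set R := (z • (1 : Matrix (Fin n) (Fin n) ℝ) - A)⁻¹
  set R' := (z⁻¹ • (1 : Matrix (Fin n) (Fin n) ℝ) - Aᵀ)⁻¹
  have hRA : R * A = z • R - 1 := by
    rw [← r1, Matrix.mul_sub]; simp
  have hAR : Aᵀ * R' = z⁻¹ • R' - 1 := by
    rw [← r2, Matrix.sub_mul]; simp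
  have q1 : R * (B * Bᵀ) * R' = P - z⁻¹ • (P * R') - z • (R * P) := by
    rw [← hP]
    have : R * (A * P * Aᵀ - P) * R' = (R * A) * P * (Aᵀ * R') - R * P * R' := by
      simp only [Matrix.mul_sub, Matrix.sub_mul, Matrix.mul_assoc]
    rw [this, hRA, hAR]
    simp only [Matrix.mul_sub, Matrix.sub_mul, smul_mul_assoc, mul_smul_comm, Matrix.one_mul,
      Matrix.mul_one, smul_sub, smul_smul, mul_inv_cancel₀ hz, inv_mul_cancel₀ hz, one_smul]
    abel
  have q2 : C * R * B * Dᵀ = C * (z • (R * P) - P) * Cᵀ := by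
    rw [Matrix.mul_assoc, hBD]
    have : C * R * (A * P * Cᵀ) = C * ((R * A) * P) * Cᵀ := by simp only [Matrix.mul_assoc]
    rw [this, hRA, Matrix.sub_mul, smul_mul_assoc, Matrix.one_mul]
  have q3 : D * (Bᵀ * R' * Cᵀ) = C * (z⁻¹ • (P * R') - P) * Cᵀ := by
    rw [← Matrix.mul_assoc, ← Matrix.mul_assoc, hDB]
    have : C * P * Aᵀ * R' * Cᵀ = C * (P * (Aᵀ * R')) * Cᵀ := by simp only [Matrix.mul_assoc]
    rw [this, hAR, Matrix.mul_sub, mul_smul_comm, Matrix.mul_one]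
  have q4 : C * R * B * (Bᵀ * R' * Cᵀ) = C * (P - z⁻¹ • (P * R') - z • (R * P)) * Cᵀ := by
    rw [← q1]; simp only [Matrix.mul_assoc]
  rw [Matrix.add_mul, Matrix.mul_add, Matrix.mul_add, q2, q3, q4, hDD]
  simp only [Matrix.mul_sub, Matrix.sub_mul]
  abel
end
end

section
/- Let (A,B,C,D) with A ∈ ℝ^{n×n}, B ∈ ℝ^{n×m}, C ∈ ℝ^{m×n}, D ∈ ℝ^{m×m} be a minimal realization of an all-pass function, and let Q₀ be the unique symmetric invertible matrix satisfying Aᵀ Q₀ A − Q₀ = Cᵀ C, Cᵀ D = Aᵀ Q₀ B, Dᵀ D − Bᵀ Q₀ B = I. Then: (a) for every symmetric Δ ∈ ℝ^{n×n} with A Δ Aᵀ = Δ, the matrix Q₀⁻¹ + Δ is invertible and Q_Δ := (Q₀⁻¹ + Δ)⁻¹ is a symmetric invertible matrix with N(Q_Δ) positive semidefinite of rank m; (b) conversely, every symmetric invertible Q with N(Q) positive semidefinite of rank m equals (Q₀⁻¹ + Δ)⁻¹ for some symmetric Δ with A Δ Aᵀ = Δ; (c) if A is unmixed, then Q₀ is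 the unique symmetric invertible matrix with N(Q) positive semidefinite of rank m. -/
open Matrix

noncomputable section

/-- `A` is unmixed: no pair of (complex) eigenvalues `λ, μ` of `A` satisfies `λμ = 1`. -/
def Unmixed {N : Type*} [Fintype N] [DecidableEq N] (A : Matrix N N ℝ) : Prop :=
  ∀ lam mu : ℂ, lam ∈ spectrum ℂ (A.map (algebraMap ℝ ℂ)) →
    mu ∈ spectrum ℂ (A.map (algebraMap ℝ ℂ)) → lam * mu ≠ 1

lemma reach_zero {n m : ℕ} {A : Matrix (Fin n) (Fin n) ℝ} {B : Matrix (Fin n) (Fin m) ℝ}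
    (h : Reachable A B) (v : Fin n → ℝ) (hv : ∀ k : ℕ, Bᵀ *ᵥ ((Aᵀ ^ k) *ᵥ v) = 0) : v = 0 := by
  have key : ∀ x ∈ Submodule.span ℝ
      {v : Fin n → ℝ | ∃ k < Fintype.card (Fin n), ∃ j : Fin m, v = (A ^ k) *ᵥ (fun i => B i j)},
      x ⬝ᵥ v = 0 := by
    intro x hx
    induction hx using Submodule.span_induction with
    | mem x hx =>
      obtain ⟨k, -, j, rfl⟩ := hx
      have := congrFun (hv k) j
      rw [← Matrix.transpose_pow, Matrix.mulVec_transpose (A ^ k)] at this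
      rw [dotProduct_comm, Matrix.dotProduct_mulVec, dotProduct_comm]
      exact this
    | zero => simp
    | add x y _ _ hx hy => rw [add_dotProduct, hx, hy, add_zero]
    | smul a x _ hx => rw [smul_dotProduct, hx, smul_zero]
  have := key v (by rw [Reachable] at h; rw [h]; trivial)
  exact dotProduct_self_eq_zero.mp this

lemma exists_zeta {n : ℕ} (a : Matrix (Fin n) (Fin n) ℂ) :
    ∃ z : ℂ, star z * z = 1 ∧ IsUnit (a - z • (1 : Matrix (Fin n) (Fin n) ℂ)) := by
  have hinf : (Set.range (fun t : Set.Ioo (0:ℝ) 1 =>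
      (⟨t.1, Real.sqrt (1 - t.1 ^ 2)⟩ : ℂ))).Infinite := by
    have : Infinite (Set.Ioo (0:ℝ) 1) := (Set.Ioo_infinite (by norm_num)).to_subtype
    apply Set.infinite_range_of_injective
    intro s t hst
    exact Subtype.ext (congrArg Complex.re hst)
  have hfin : (spectrum ℂ a).Finite := Matrix.finite_spectrum a
  obtain ⟨z, ⟨t, rfl⟩, hz⟩ := hinf.exists_notMem_finite hfin
  refine ⟨(⟨t.1, Real.sqrt (1 - t.1 ^ 2)⟩ : ℂ), ?_, ?_⟩
  rotate_left
  · rw [spectrum.notMem_iff, Algebra.algebraMap_eq_smul_one] at hz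
    have := hz.neg
    rwa [neg_sub] at this
  · obtain ⟨t, h0, h1⟩ := t
    have : 0 ≤ 1 - t ^ 2 := by nlinarith
    apply Complex.ext
    · simp
      nlinarith [Real.mul_self_sqrt this]
    · simp
      ring

lemma ker_inv {n m : ℕ} (a p : Matrix (Fin n) (Fin n) ℂ) (b : Matrix (Fin n) (Fin m) ℂ)
    (hp : pᴴ = p) (h : a * p * aᴴ - b * bᴴ = p) (v : Fin n → ℂ) (hv : p *ᵥ v = 0) :
    bᴴ *ᵥ v = 0 ∧ p *ᵥ (aᴴ *ᵥ v) = 0 := by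
  obtain ⟨z, hz, hF⟩ := exists_zeta a
  set F := a - z • (1 : Matrix (Fin n) (Fin n) ℂ) with hFd
  have hFH : Fᴴ = aᴴ - star z • (1 : Matrix (Fin n) (Fin n) ℂ) := by
    simp [hFd]
  have hFinj : Function.Injective F.mulVec := Matrix.mulVec_injective_of_isUnit hF
  have hFHu : IsUnit Fᴴ := by simpa using hF.star
  have hdet : IsUnit Fᴴ.det := (Matrix.isUnit_iff_isUnit_det _).mp hFHu
  have step : ∀ w : Fin n → ℂ, p *ᵥ (Fᴴ *ᵥ w) = 0 → bᴴ *ᵥ w = 0 ∧ p *ᵥ w = 0 := by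
    intro w hw
    have ha : aᴴ *ᵥ w = Fᴴ *ᵥ w + star z • w := by
      rw [hFH, Matrix.sub_mulVec, Matrix.smul_mulVec, Matrix.one_mulVec]; abel
    have haF : ∀ x, a *ᵥ x = F *ᵥ x + z • x := by
      intro x
      rw [hFd, Matrix.sub_mulVec, Matrix.smul_mulVec, Matrix.one_mulVec]; abel
    have h1 : b *ᵥ (bᴴ *ᵥ w) = star z • (F *ᵥ (p *ᵥ w)) := by
      have := congrArg (fun X => X *ᵥ w) h
      simp only [Matrix.sub_mulVec, ← Matrix.mulVec_mulVec] at this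
      rw [ha, Matrix.mulVec_add, hw, zero_add, Matrix.mulVec_smul, Matrix.mulVec_smul, haF,
        smul_add, smul_smul, hz, one_smul] at this
      have h2 := sub_eq_iff_eq_add.mp this
      rw [add_comm] at h2
      exact (add_left_cancel h2).symm
    have h2 : star (bᴴ *ᵥ w) ⬝ᵥ (bᴴ *ᵥ w) = 0 := by
      rw [Matrix.star_mulVec, Matrix.conjTranspose_conjTranspose, ← Matrix.dotProduct_mulVec, h1,
        dotProduct_smul, Matrix.dotProduct_mulVec]
      have : star w ᵥ* F = star (Fᴴ *ᵥ w) := by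
        rw [Matrix.star_mulVec, Matrix.conjTranspose_conjTranspose]
      rw [this, Matrix.dotProduct_mulVec]
      have : star (Fᴴ *ᵥ w) ᵥ* p = star (p *ᵥ (Fᴴ *ᵥ w)) := by
        rw [Matrix.star_mulVec p, hp]
      rw [this, hw]; simp
    have h3 : bᴴ *ᵥ w = 0 := by
      open ComplexOrder in exact dotProduct_star_self_eq_zero.mp h2
    refine ⟨h3, ?_⟩
    rw [h3, Matrix.mulVec_zero] at h1
    have hz0 : star z ≠ 0 := by
      intro h0; rw [h0] at hz; simp at hz
    have h4 := (smul_eq_zero.mp h1.symm).resolve_left hz0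
    exact hFinj (by simpa using h4)
  -- the kernel and the map G
  let K : Submodule ℂ (Fin n → ℂ) := LinearMap.ker p.mulVecLin
  have hK : ∀ x, x ∈ K ↔ p *ᵥ x = 0 := fun x => by simp [K]
  let G : (Fin n → ℂ) →ₗ[ℂ] (Fin n → ℂ) := (Fᴴ)⁻¹.mulVecLin
  have hFG : ∀ x, Fᴴ *ᵥ (G x) = x := fun x => by
    simp [G, Matrix.mulVec_mulVec, Matrix.mul_nonsing_inv _ hdet]
  have hGK : ∀ x ∈ K, G x ∈ K := by
    intro x hx
    rw [hK] at hx ⊢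
    exact (step (G x) (by rw [hFG]; exact hx)).2
  have hGinj : Function.Injective (G.restrict hGK) := by
    intro x y hxy
    have h1 := congrArg Subtype.val hxy
    have h2 := congrArg (fun u => Fᴴ *ᵥ u) h1
    simp only [LinearMap.coe_restrict_apply, hFG] at h2
    exact Subtype.ext h2
  have hGsurj := LinearMap.injective_iff_surjective.mp hGinj
  obtain ⟨⟨u, hu⟩, huv⟩ := hGsurj ⟨v, (hK v).mpr hv⟩
  have hGu : G u = v := congrArg Subtype.val huv
  have hFv : Fᴴ *ᵥ v = u := by rw [← hGu, hFG]
  refine ⟨(step v (by rw [hFv]; exact (hK u).mp hu)).1, ?_⟩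
  have ha : aᴴ *ᵥ v = Fᴴ *ᵥ v + star z • v := by
    rw [hFH, Matrix.sub_mulVec, Matrix.smul_mulVec, Matrix.one_mulVec]; abel
  rw [ha, hFv, Matrix.mulVec_add, (hK u).mp hu, Matrix.mulVec_smul, hv]; simp

lemma stein_isUnit {n m : ℕ} {A : Matrix (Fin n) (Fin n) ℝ} {B : Matrix (Fin n) (Fin m) ℝ}
    (hr : Reachable A B) (P : Matrix (Fin n) (Fin n) ℝ) (hP : Pᵀ = P)
    (h : A * P * Aᵀ - B * Bᵀ = P) : IsUnit P := by
  rw [← Matrix.mulVec_injective_iff_isUnit]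
  have hinj : ∀ v, P *ᵥ v = 0 → v = 0 := by
    intro v hv
    apply reach_zero hr
    let c : ℝ →+* ℂ := Complex.ofRealHom
    have hconj : ∀ {k l : ℕ} (X : Matrix (Fin k) (Fin l) ℝ), (X.map c)ᴴ = Xᵀ.map c := by
      intro k l X; ext i j; simp [c]
    have hmv : ∀ {k l : ℕ} (X : Matrix (Fin k) (Fin l) ℝ) (x : Fin l → ℝ),
        (X.map c) *ᵥ (c ∘ x) = c ∘ (X *ᵥ x) := by
      intro k l X x; ext i; exact (RingHom.map_mulVec c X x i).symm
    have hz : ∀ {k : ℕ} (x : Fin k → ℝ), c ∘ x = 0 ↔ x = 0 := by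
      intro k x
      constructor
      · intro h; ext i; have := congrFun h i; simpa [c] using this
      · rintro rfl; ext i; simp
    have hst : ∀ x : Fin n → ℝ, P *ᵥ x = 0 → Bᵀ *ᵥ x = 0 ∧ P *ᵥ (Aᵀ *ᵥ x) = 0 := by
      intro x hx
      have := ker_inv (A.map c) (P.map c) (B.map c) (by rw [hconj, hP])
        (by
          rw [hconj, hconj]
          conv_rhs => rw [← h]
          rw [Matrix.map_sub c (map_sub c), Matrix.map_mul, Matrix.map_mul, Matrix.map_mul])
        (c ∘ x) (by rw [hmv, hz]; exact hx)
      simpa only [hconj, hmv, hz] using this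
    have hk : ∀ k : ℕ, P *ᵥ ((Aᵀ ^ k) *ᵥ v) = 0 := by
      intro k
      induction k with
      | zero => simpa using hv
      | succ k ih =>
        rw [pow_succ', ← Matrix.mulVec_mulVec]
        exact (hst _ ih).2
    exact fun k => (hst _ (hk k)).1
  intro x y hxy
  have := hinj (x - y) (by rw [Matrix.mulVec_sub, sub_eq_zero]; exact hxy)
  exact sub_eq_zero.mp this

lemma stein_unmixed {n : ℕ} {A : Matrix (Fin n) (Fin n) ℝ} (hA : Unmixed A)
    (Δ : Matrix (Fin n) (Fin n) ℝ) (h : A * Δ * Aᵀ = Δ) : Δ = 0 := by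
  by_contra hne
  let c : ℝ →+* ℂ := algebraMap ℝ ℂ
  let a := A.map c
  let X : Submodule ℂ (Matrix (Fin n) (Fin n) ℂ) :=
    LinearMap.ker (LinearMap.mulLeft ℂ a ∘ₗ LinearMap.mulRight ℂ aᵀ - LinearMap.id)
  have hX : ∀ x, x ∈ X ↔ a * (x * aᵀ) = x := by
    intro x; simp [X, sub_eq_zero]
  have hmem : Δ.map c ∈ X := by
    rw [hX]
    conv_rhs => rw [← h]
    simp [a, Matrix.map_mul, Matrix.transpose_map, Matrix.mul_assoc]
  have hL : ∀ x ∈ X, LinearMap.mulLeft ℂ a x ∈ X := by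
    intro x hx
    rw [hX] at hx ⊢
    simp only [LinearMap.mulLeft_apply]
    rw [Matrix.mul_assoc a x, hx]
  have : Nontrivial X := by
    refine ⟨⟨⟨_, hmem⟩, 0, ?_⟩⟩
    intro h0
    apply hne
    have := congrArg Subtype.val h0
    ext i j
    have := congrFun (congrFun this i) j
    simpa [c] using this
  obtain ⟨l, hl⟩ := Module.End.exists_eigenvalue ((LinearMap.mulLeft ℂ a).restrict hL)
  obtain ⟨⟨x, hx⟩, hxe⟩ := hl.exists_hasEigenvector
  have hx0 : x ≠ 0 := fun h0 => hxe.2 (Subtype.ext h0)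
  have hax : a * x = l • x := congrArg Subtype.val hxe.apply_eq_smul
  rw [hX, ← Matrix.mul_assoc, hax, Matrix.smul_mul] at hx
  have hl0 : l ≠ 0 := by
    rintro rfl; rw [zero_smul] at hx; exact hx0 hx.symm
  have hxa : x * aᵀ = l⁻¹ • x := by
    conv_rhs => rw [← hx]
    rw [smul_smul, inv_mul_cancel₀ hl0, one_smul]
  have hsp : ∀ (mu : ℂ) (y : Matrix (Fin n) (Fin n) ℂ), y ≠ 0 → a * y = mu • y →
      mu ∈ spectrum ℂ a := by
    intro mu y hy hay
    rw [spectrum.mem_iff]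
    intro hu
    apply hy
    have : (algebraMap ℂ (Matrix (Fin n) (Fin n) ℂ) mu - a) * y = 0 := by
      rw [sub_mul, hay, Algebra.algebraMap_eq_smul_one, Matrix.smul_mul, one_mul, sub_self]
    exact (hu.mul_right_eq_zero).mp this
  refine hA l l⁻¹ (hsp l x hx0 hax) (hsp l⁻¹ xᵀ ?_ ?_) (mul_inv_cancel₀ hl0)
  · intro h0; exact hx0 (by simpa using h0)
  · have := congrArg Matrix.transpose hxa
    simpa using this

lemma posDef_continuity {m : ℕ} (f : ℝ → Matrix (Fin m) (Fin m) ℝ) (hf : Continuous f)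
    (hs : ∀ t, (f t)ᵀ = f t) (hu : ∀ t, IsUnit (f t)) (h0 : (f 0).PosDef) (t : ℝ) :
    (f t).PosDef := by
  have hherm : ∀ t, (f t).IsHermitian := fun t => by
    rw [Matrix.IsHermitian, Matrix.conjTranspose_eq_transpose_of_trivial, hs]
  have hq : Continuous (fun q : (Fin m → ℝ) × ℝ => q.1 ⬝ᵥ (f q.2 *ᵥ q.1)) :=
    Continuous.dotProduct continuous_fst
      (Continuous.matrix_mulVec (hf.comp continuous_snd) continuous_fst)
  have hclosed : IsClosed {t | (f t).PosDef} := by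
    have : {t | (f t).PosDef} = ⋂ x : Fin m → ℝ, {t | 0 ≤ x ⬝ᵥ (f t *ᵥ x)} := by
      ext t
      simp only [Set.mem_ofPred_eq, Set.mem_iInter]
      constructor
      · intro h x
        simpa using h.posSemidef.dotProduct_mulVec_nonneg x
      · intro h
        have hp : (f t).PosSemidef :=
          Matrix.PosSemidef.of_dotProduct_mulVec_nonneg (hherm t) (by simpa using h)
        exact hp.posDef_iff_isUnit.mpr (hu t)
    rw [this]
    refine isClosed_iInter fun x => isClosed_le continuous_const ?_
    exact hq.comp (Continuous.prodMk continuous_const continuous_id)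
  have hopen : IsOpen {t | (f t).PosDef} := by
    rw [← isClosed_compl_iff]
    let Sp := Metric.sphere (0 : Fin m → ℝ) 1
    have hcl : IsClosed {q : Sp × ℝ | (q.1 : Fin m → ℝ) ⬝ᵥ (f q.2 *ᵥ q.1) ≤ 0} := by
      refine isClosed_le ?_ continuous_const
      exact hq.comp (Continuous.prodMk (continuous_subtype_val.comp continuous_fst) continuous_snd)
    have : CompactSpace Sp := isCompact_iff_compactSpace.mp (isCompact_sphere _ _)
    have := isClosedMap_snd_of_compactSpace _ hcl
    convert this using 1
    ext t
    simp only [Set.mem_compl_iff, Set.mem_ofPred_eq, Set.mem_image, Prod.exists, exists_eq_right]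
    constructor
    · intro h
      by_contra hc
      push Not at hc
      apply h
      refine Matrix.PosDef.of_dotProduct_mulVec_pos (hherm t) ?_
      intro x hx
      have hn : 0 < ‖x‖ := norm_pos_iff.mpr hx
      have h1 := hc ⟨‖x‖⁻¹ • x, by simp [Sp, norm_smul, hn.ne']⟩
      simp only [smul_dotProduct, Matrix.mulVec_smul, dotProduct_smul, smul_eq_mul] at h1
      have h2 : 0 < ‖x‖⁻¹ := inv_pos.mpr hn
      have h3 := pos_of_mul_pos_right h1 h2.le
      have h4 := pos_of_mul_pos_right h3 h2.le
      simpa using h4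
    · rintro ⟨⟨x, hx⟩, hle⟩ hp
      have hx0 : x ≠ 0 := by
        rintro rfl; simp [Sp] at hx
      have := hp.dotProduct_mulVec_pos hx0
      simp only [star_trivial] at this
      exact absurd this (not_lt.mpr hle)
  have := IsClopen.eq_univ ⟨hclosed, hopen⟩ ⟨0, h0⟩
  exact (Set.ext_iff.mp this t).mpr trivial

/-- converse direction: the rank condition forces the dual Stein equation -/
lemma stein_of_rank {n m : ℕ} (A : Matrix (Fin n) (Fin n) ℝ) (B : Matrix (Fin n) (Fin m) ℝ)
    (Q : Matrix (Fin n) (Fin n) ℝ) (hu : IsUnit Q)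
    (hr : (Matrix.fromBlocks (Aᵀ * Q * A - Q) (Aᵀ * Q * B)
        (Bᵀ * Q * A) (Bᵀ * Q * B + 1)).rank = m) :
    A * Q⁻¹ * Aᵀ - B * Bᵀ = Q⁻¹ := by
  have hdet : IsUnit Q.det := (Matrix.isUnit_iff_isUnit_det _).mp hu
  set N := Matrix.fromBlocks (Aᵀ * Q * A - Q) (Aᵀ * Q * B) (Bᵀ * Q * A) (Bᵀ * Q * B + 1) with hN
  let K := LinearMap.ker N.mulVecLin
  have hdim : Module.finrank ℝ K = Module.finrank ℝ (Fin n → ℝ) := by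
    have h1 := LinearMap.finrank_range_add_finrank_ker N.mulVecLin
    rw [Matrix.rank] at hr
    rw [hr] at h1
    simp at h1 ⊢
    simp only [K]
    omega
  have hker : ∀ x ∈ K, ∃ y, y = (Q * Matrix.fromCols A B) *ᵥ x ∧
      x = Sum.elim (Q⁻¹ *ᵥ (Aᵀ *ᵥ y)) (-(Bᵀ *ᵥ y)) := by
    intro x hx
    refine ⟨_, rfl, ?_⟩
    have hx' : N *ᵥ x = 0 := by simpa [K] using hx
    obtain ⟨a, b, rfl⟩ : ∃ a b, x = Sum.elim a b := ⟨x ∘ Sum.inl, x ∘ Sum.inr, by simp⟩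
    rw [hN, Matrix.fromBlocks_mulVec] at hx'
    have e1 : (Aᵀ * Q * A - Q) *ᵥ a + (Aᵀ * Q * B) *ᵥ b = 0 := by
      ext i; simpa using congrFun hx' (Sum.inl i)
    have e2 : (Bᵀ * Q * A) *ᵥ a + (Bᵀ * Q * B + 1) *ᵥ b = 0 := by
      ext i; simpa using congrFun hx' (Sum.inr i)
    have hy : (Q * Matrix.fromCols A B) *ᵥ Sum.elim a b = Q *ᵥ (A *ᵥ a) + Q *ᵥ (B *ᵥ b) := by
      rw [← Matrix.mulVec_mulVec, Matrix.fromCols_mulVec, Matrix.mulVec_add]; rfl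
    rw [hy]
    simp only [Matrix.sub_mulVec, Matrix.add_mulVec, ← Matrix.mulVec_mulVec, Matrix.one_mulVec,
      Matrix.mulVec_add] at e1 e2 ⊢
    congr 1
    · have : Aᵀ *ᵥ (Q *ᵥ (A *ᵥ a)) + Aᵀ *ᵥ (Q *ᵥ (B *ᵥ b)) = Q *ᵥ a := by
        rw [← sub_eq_zero, ← e1]; abel
      rw [← Matrix.mulVec_add, this, Matrix.mulVec_mulVec, Matrix.nonsing_inv_mul _ hdet,
        Matrix.one_mulVec]
    · rw [eq_neg_iff_add_eq_zero, ← e2]; abel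
  let T : K →ₗ[ℝ] (Fin n → ℝ) := (Q * Matrix.fromCols A B).mulVecLin ∘ₗ K.subtype
  have hTinj : Function.Injective T := by
    rw [← LinearMap.ker_eq_bot, LinearMap.ker_eq_bot']
    rintro ⟨x, hx⟩ hTx
    obtain ⟨y, hy, hxy⟩ := hker x hx
    have : y = 0 := by rw [hy]; exact hTx
    apply Subtype.ext
    rw [this] at hxy
    change x = 0
    rw [hxy]
    ext i; cases i <;> simp
  have hTs := (LinearMap.injective_iff_surjective_of_finrank_eq_finrank hdim).mp hTinj
  have hone : Q * (A * Q⁻¹ * Aᵀ - B * Bᵀ) = 1 := by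
    apply Matrix.ext_of_mulVec_single
    intro i
    obtain ⟨⟨x, hx⟩, hTx⟩ := hTs (Pi.single i 1)
    obtain ⟨y, hy, hxy⟩ := hker x hx
    have hy' : y = Pi.single i 1 := by rw [hy]; exact hTx
    rw [← hy', Matrix.one_mulVec]
    conv_rhs => rw [hy, hxy]
    rw [← Matrix.mulVec_mulVec, ← Matrix.mulVec_mulVec, Matrix.fromCols_mulVec]
    congr 1
    rw [Matrix.sub_mulVec]
    simp [Matrix.mulVec_neg, sub_eq_add_neg, Matrix.mulVec_mulVec,
      Matrix.mul_assoc]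
  exact (Matrix.inv_eq_right_inv hone).symm

lemma congr_dual {ι : Type*} [Fintype ι] [DecidableEq ι] (M M' X X' Y Y' : Matrix ι ι ℝ)
    (h : M * X * M' = Y) (hX : X' * X = 1) (hY : Y * Y' = 1) : M' * Y' * M = X' := by
  have h1 : M * (X * M' * Y') = 1 := by
    rw [← hY, ← h]; simp only [Matrix.mul_assoc]
  have h2 : (X * M' * Y') * M = 1 := mul_eq_one_comm.mp h1
  calc M' * Y' * M = X' * X * (M' * Y' * M) := by rw [hX, Matrix.one_mul]
    _ = X' * ((X * M' * Y') * M) := by simp only [Matrix.mul_assoc]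
    _ = X' := by rw [h2, Matrix.mul_one]

lemma dual_first {n m : ℕ} {A : Matrix (Fin n) (Fin n) ℝ} {B : Matrix (Fin n) (Fin m) ℝ}
    {C : Matrix (Fin m) (Fin n) ℝ} {D : Matrix (Fin m) (Fin m) ℝ}
    {Q P : Matrix (Fin n) (Fin n) ℝ} (hs : Qᵀ = Q) (hPQ : P * Q = 1)
    (h1 : Aᵀ * Q * A - Q = Cᵀ * C) (h2 : Cᵀ * D = Aᵀ * Q * B)
    (h3 : Dᵀ * D - Bᵀ * Q * B = 1) :
    A * P * Aᵀ - B * Bᵀ = P ∧ A * P * Cᵀ = B * Dᵀ ∧ C * P * Cᵀ - D * Dᵀ = -1 := by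
  have hQP : Q * P = 1 := mul_eq_one_comm.mp hPQ
  have h2' : Dᵀ * C = Bᵀ * Q * A := by
    have := congrArg Matrix.transpose h2
    simpa [Matrix.transpose_mul, hs, Matrix.mul_assoc] using this
  have h := congr_dual (Matrix.fromBlocks Aᵀ Cᵀ Bᵀ Dᵀ) (Matrix.fromBlocks A B C D)
    (Matrix.fromBlocks Q 0 0 (-1)) (Matrix.fromBlocks P 0 0 (-1))
    (Matrix.fromBlocks Q 0 0 (-1)) (Matrix.fromBlocks P 0 0 (-1))
    (by
      simp only [Matrix.fromBlocks_multiply, Matrix.mul_zero, Matrix.zero_mul, add_zero, zero_add,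
        Matrix.mul_neg, Matrix.neg_mul, Matrix.mul_one]
      congr 1
      · rw [← h1]; abel
      · rw [h2]; abel
      · rw [h2']; abel
      · rw [← h3]; abel)
    (by simp [Matrix.fromBlocks_multiply, hPQ])
    (by simp [Matrix.fromBlocks_multiply, hQP])
  simp only [Matrix.fromBlocks_multiply, Matrix.mul_zero, Matrix.zero_mul, add_zero, zero_add,
        Matrix.mul_neg, Matrix.neg_mul, Matrix.mul_one] at h
  obtain ⟨e1, e2, e3, e4⟩ := Matrix.fromBlocks_inj.mp h
  refine ⟨?_, ?_, ?_⟩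
  · rw [sub_eq_add_neg]; exact e1
  · rw [← sub_eq_zero, sub_eq_add_neg]; exact e2
  · rw [sub_eq_add_neg]; exact e4

/-- The Gram matrix `G` is invertible. -/
lemma gram_isUnit {n m : ℕ} {A : Matrix (Fin n) (Fin n) ℝ} {B : Matrix (Fin n) (Fin m) ℝ}
    {C : Matrix (Fin m) (Fin n) ℝ} {D : Matrix (Fin m) (Fin m) ℝ}
    {Q P P' Q' : Matrix (Fin n) (Fin n) ℝ} (hs : Qᵀ = Q) (hPQ : P * Q = 1)
    (h1 : Aᵀ * Q * A - Q = Cᵀ * C) (h2 : Cᵀ * D = Aᵀ * Q * B)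
    (h3 : Dᵀ * D - Bᵀ * Q * B = 1) (hPQ' : P' * Q' = 1)
    (h' : A * P' * Aᵀ - B * Bᵀ = P') :
    IsUnit (D * Dᵀ - C * P * Q' * P * Cᵀ) := by
  obtain ⟨k1, k2, k3⟩ := dual_first hs hPQ h1 h2 h3
  have hQP : Q * P = 1 := mul_eq_one_comm.mp hPQ
  have hQP' : Q' * P' = 1 := mul_eq_one_comm.mp hPQ'
  have h2' : Bᵀ * Q * A = Dᵀ * C := by
    have := congrArg Matrix.transpose h2
    simpa [Matrix.transpose_mul, hs, Matrix.mul_assoc] using this.symm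
  set W : Matrix (Fin m) (Fin m) ℝ := D * Dᵀ - C * P * Q' * P * Cᵀ with hW
  rw [← Matrix.mulVec_injective_iff_isUnit]
  have hinj : ∀ w, W *ᵥ w = 0 → w = 0 := by
    intro w hw
    -- work with one-column matrices
    set a := P *ᵥ (Cᵀ *ᵥ w) with ha
    set b := -(Dᵀ *ᵥ w) with hb
    set y := Q' *ᵥ a with hy
    have hab : A *ᵥ a + B *ᵥ b = 0 := by
      rw [ha, hb, Matrix.mulVec_neg, Matrix.mulVec_mulVec, Matrix.mulVec_mulVec,
        Matrix.mulVec_mulVec, k2, add_neg_cancel]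
    have hcd : C *ᵥ (P *ᵥ y) + D *ᵥ b = 0 := by
      have : C *ᵥ (P *ᵥ y) + D *ᵥ b = -(W *ᵥ w) := by
        rw [hy, ha, hb, hW]
        simp only [Matrix.mulVec_neg, Matrix.sub_mulVec, Matrix.mulVec_mulVec, Matrix.mul_assoc]
        abel
      rw [this, hw, neg_zero]
    set u := Q *ᵥ (A *ᵥ (P *ᵥ y)) + Q *ᵥ (B *ᵥ b) with hu
    have hAu : Aᵀ *ᵥ u = y := by
      have e1 : Aᵀ * Q * A = Q + Cᵀ * C := by rw [← h1]; abel
      have e2 : Aᵀ *ᵥ u = (Aᵀ * Q * A) *ᵥ (P *ᵥ y) + (Aᵀ * Q * B) *ᵥ b := by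
        rw [hu]; simp only [Matrix.mulVec_add, ← Matrix.mulVec_mulVec]
      rw [e2, e1, ← h2, Matrix.add_mulVec, ← Matrix.mulVec_mulVec, ← Matrix.mulVec_mulVec,
        add_assoc, ← Matrix.mulVec_add, hcd, Matrix.mulVec_zero, add_zero, Matrix.mulVec_mulVec,
        hQP, Matrix.one_mulVec]
    have hBu : Bᵀ *ᵥ u = -b := by
      have e1 : Bᵀ * Q * B = Dᵀ * D - 1 := by rw [← h3]; abel
      have e2 : Bᵀ *ᵥ u = (Bᵀ * Q * A) *ᵥ (P *ᵥ y) + (Bᵀ * Q * B) *ᵥ b := by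
        rw [hu]; simp only [Matrix.mulVec_add, ← Matrix.mulVec_mulVec]
      rw [e2, e1, h2', Matrix.sub_mulVec, ← Matrix.mulVec_mulVec, ← Matrix.mulVec_mulVec,
        ← add_sub_assoc, ← Matrix.mulVec_add, hcd, Matrix.mulVec_zero, zero_sub,
        Matrix.one_mulVec]
    have ha' : a = P' *ᵥ (Aᵀ *ᵥ u) := by
      rw [hAu, hy, Matrix.mulVec_mulVec, hPQ', Matrix.one_mulVec]
    have hb' : b = -(Bᵀ *ᵥ u) := by rw [hBu, neg_neg]
    have hPu : P' *ᵥ u = 0 := by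
      rw [← hab, ha', hb']
      conv_lhs => rw [← h']
      simp only [Matrix.mulVec_neg, Matrix.sub_mulVec, Matrix.mulVec_mulVec, Matrix.mul_assoc]
      abel
    have hu0 : u = 0 := by
      rw [← Matrix.one_mulVec u, ← hQP', ← Matrix.mulVec_mulVec, hPu, Matrix.mulVec_zero]
    have ha0 : P *ᵥ (Cᵀ *ᵥ w) = 0 := by rw [← ha, ha', hu0]; simp
    have hb0 : Dᵀ *ᵥ w = 0 := by
      have : b = 0 := by rw [hb', hu0]; simp
      rw [hb] at this; simpa using this
    have := congrArg (fun X => X *ᵥ w) k3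
    simp only [Matrix.sub_mulVec, ← Matrix.mulVec_mulVec, ha0, hb0, Matrix.mulVec_zero,
      Matrix.neg_mulVec, Matrix.one_mulVec, sub_self] at this
    exact neg_eq_zero.mp this.symm
  intro x y hxy
  have := hinj (x - y) (by rw [Matrix.mulVec_sub, sub_eq_zero]; exact hxy)
  exact sub_eq_zero.mp this

lemma part_a {n m : ℕ} {A : Matrix (Fin n) (Fin n) ℝ} {B : Matrix (Fin n) (Fin m) ℝ}
    {C : Matrix (Fin m) (Fin n) ℝ} {D : Matrix (Fin m) (Fin m) ℝ} (hr : Reachable A B)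
    {Q P : Matrix (Fin n) (Fin n) ℝ} (hs : Qᵀ = Q) (hPs : Pᵀ = P) (hPQ : P * Q = 1)
    (h1 : Aᵀ * Q * A - Q = Cᵀ * C) (h2 : Cᵀ * D = Aᵀ * Q * B)
    (h3 : Dᵀ * D - Bᵀ * Q * B = 1)
    (Δ : Matrix (Fin n) (Fin n) ℝ) (hΔs : Δᵀ = Δ) (hΔ : A * Δ * Aᵀ = Δ) :
    IsUnit (P + Δ) ∧
      (Matrix.fromBlocks (Aᵀ * (P + Δ)⁻¹ * A - (P + Δ)⁻¹) (Aᵀ * (P + Δ)⁻¹ * B)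
        (Bᵀ * (P + Δ)⁻¹ * A) (Bᵀ * (P + Δ)⁻¹ * B + 1)).PosSemidef ∧
      (Matrix.fromBlocks (Aᵀ * (P + Δ)⁻¹ * A - (P + Δ)⁻¹) (Aᵀ * (P + Δ)⁻¹ * B)
        (Bᵀ * (P + Δ)⁻¹ * A) (Bᵀ * (P + Δ)⁻¹ * B + 1)).rank = m := by
  obtain ⟨k1, k2, k3⟩ := dual_first hs hPQ h1 h2 h3
  have hQP : Q * P = 1 := mul_eq_one_comm.mp hPQ
  have hsym : ∀ t : ℝ, (P + t • Δ)ᵀ = P + t • Δ := by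
    intro t; rw [Matrix.transpose_add, Matrix.transpose_smul, hPs, hΔs]
  have hst : ∀ t : ℝ, A * (P + t • Δ) * Aᵀ - B * Bᵀ = P + t • Δ := by
    intro t
    rw [Matrix.mul_add, Matrix.add_mul, Matrix.mul_smul, Matrix.smul_mul, hΔ]
    conv_rhs => rw [← k1]
    abel
  have hunit : ∀ t : ℝ, IsUnit (P + t • Δ) := fun t => stein_isUnit hr _ (hsym t) (hst t)
  have hdet : ∀ t : ℝ, IsUnit (P + t • Δ).det := fun t =>
    (Matrix.isUnit_iff_isUnit_det _).mp (hunit t)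
  let f : ℝ → Matrix (Fin m) (Fin m) ℝ := fun t =>
    D * Dᵀ - C * P * (P + t • Δ)⁻¹ * P * Cᵀ
  have hinvs : ∀ t : ℝ, ((P + t • Δ)⁻¹)ᵀ = (P + t • Δ)⁻¹ := by
    intro t; rw [Matrix.transpose_nonsing_inv, hsym]
  have hfs : ∀ t, (f t)ᵀ = f t := by
    intro t
    simp only [f, Matrix.transpose_sub, Matrix.transpose_mul, Matrix.transpose_transpose, hinvs,
      hPs, Matrix.mul_assoc]
  have hPtc : Continuous (fun t : ℝ => P + t • Δ) := by fun_prop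
  have hinvc : Continuous (fun t : ℝ => (P + t • Δ)⁻¹) := by
    simp only [Matrix.inv_def, Ring.inverse_eq_inv']
    exact (hPtc.matrix_det.inv₀ fun t => (hdet t).ne_zero).smul hPtc.matrix_adjugate
  have hfc : Continuous f := by
    simp only [f]
    exact continuous_const.sub (((continuous_const.matrix_mul hinvc).matrix_mul
      continuous_const).matrix_mul continuous_const)
  have hf0 : (f 0).PosDef := by
    have : f 0 = 1 := by
      have hPinv : P⁻¹ = Q := Matrix.inv_eq_right_inv hPQ
      simp only [f, zero_smul, add_zero, hPinv]
      rw [Matrix.mul_assoc C P Q, hPQ, Matrix.mul_one, ← neg_sub, k3, neg_neg]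
    rw [this]; exact Matrix.PosDef.one
  have hfu : ∀ t, IsUnit (f t) := fun t =>
    gram_isUnit hs hPQ h1 h2 h3 (Matrix.mul_nonsing_inv _ (hdet t)) (hst t)
  have hG := posDef_continuity f hfc hfs hfu hf0 1
  have hu1 := hunit 1
  have hd1 := hdet 1
  have hst1 := hst 1
  have hinv1 := hinvs 1
  have hGs := hfs 1
  have hGd : IsUnit (f 1).det := (Matrix.isUnit_iff_isUnit_det _).mp (hfu 1)
  have hfd : f 1 = D * Dᵀ - C * P * (P + (1:ℝ) • Δ)⁻¹ * P * Cᵀ := rfl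
  rw [one_smul] at hu1 hd1 hst1 hinv1 hfd
  generalize f 1 = G at hG hGs hGd hfd
  have hPQ' := Matrix.mul_nonsing_inv _ hd1
  have hQP' := Matrix.nonsing_inv_mul _ hd1
  generalize (P + Δ)⁻¹ = Q' at *
  generalize P + Δ = P' at *
  clear hunit hdet hfu hf0 hfc hinvc hPtc hfs hinvs hst hsym
  have hGG := Matrix.mul_nonsing_inv _ hGd
  have hGG' := Matrix.nonsing_inv_mul _ hGd
  -- the factor
  have hCP : C * P * Q' * P' = C * P := by rw [Matrix.mul_assoc, hQP', Matrix.mul_one]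
  have hPC : P' * (Q' * P * Cᵀ) = P * Cᵀ := by
    rw [← Matrix.mul_assoc, ← Matrix.mul_assoc, hPQ', Matrix.one_mul]
  have k2' : C * P * Aᵀ = D * Bᵀ := by
    have := congrArg Matrix.transpose k2
    simpa [Matrix.transpose_mul, hPs, Matrix.mul_assoc] using this
  have h := congr_dual (Matrix.fromBlocks A B (C * P * Q') D)
    (Matrix.fromBlocks Aᵀ (Q' * P * Cᵀ) Bᵀ Dᵀ)
    (Matrix.fromBlocks P' 0 0 (-1)) (Matrix.fromBlocks Q' 0 0 (-1))
    (Matrix.fromBlocks P' 0 0 (-G)) (Matrix.fromBlocks Q' 0 0 (-G⁻¹))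
    (by
      simp only [Matrix.fromBlocks_multiply, Matrix.mul_zero, Matrix.zero_mul, add_zero, zero_add,
        Matrix.mul_neg, Matrix.neg_mul, Matrix.mul_one]
      congr 1
      · rw [Matrix.mul_assoc, hPC, ← Matrix.mul_assoc, k2]; abel
      · rw [hCP, k2']; abel
      · rw [hCP, hfd]; simp only [Matrix.mul_assoc]; abel)
    (by simp [Matrix.fromBlocks_multiply, hQP'])
    (by simp [Matrix.fromBlocks_multiply, hPQ', hGG])
  simp only [Matrix.fromBlocks_multiply, Matrix.mul_zero, Matrix.zero_mul, add_zero, zero_add,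
        Matrix.mul_neg, Matrix.neg_mul, Matrix.mul_one] at h
  obtain ⟨e1, e2, e3, e4⟩ := Matrix.fromBlocks_inj.mp h
  set K := Matrix.fromCols (C * P * Q') D with hK
  have hKt : Kᵀ = Matrix.fromRows (Q' * P * Cᵀ) Dᵀ := by
    rw [hK, Matrix.transpose_fromCols]
    simp only [Matrix.transpose_mul, hinv1, hPs, Matrix.mul_assoc]
  have hN : Matrix.fromBlocks (Aᵀ * Q' * A - Q') (Aᵀ * Q' * B) (Bᵀ * Q' * A) (Bᵀ * Q' * B + 1)
      = Kᵀ * G⁻¹ * K := by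
    rw [hKt, hK, Matrix.fromRows_mul, Matrix.fromRows_mul_fromCols]
    congr 1
    · rw [← sub_eq_zero]
      nth_rewrite 2 [← e1]
      abel
    · rw [← sub_eq_zero, ← e2]; abel
    · rw [← sub_eq_zero, ← e3]; abel
    · have : (1 : Matrix (Fin m) (Fin m) ℝ) = -(-1) := by simp
      rw [this, ← e4]; abel
  refine ⟨hu1, ?_, ?_⟩
  · rw [hN]
    have := hG.inv.posSemidef.conjTranspose_mul_mul_same K
    rwa [Matrix.conjTranspose_eq_transpose_of_trivial] at this
  · rw [hN]
    apply le_antisymm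
    · calc (Kᵀ * G⁻¹ * K).rank ≤ K.rank := Matrix.rank_mul_le_right _ _
        _ ≤ Fintype.card (Fin m) := Matrix.rank_le_card_height _
        _ = m := by simp
    · set S : Matrix (Fin n ⊕ Fin m) (Fin n ⊕ Fin m) ℝ := Matrix.fromBlocks P' 0 0 (-1) with hS
      have hKSK : K * S * Kᵀ = -G := by
        rw [hKt, hK, hS, Matrix.fromCols_mul_fromBlocks, Matrix.fromCols_mul_fromRows]
        simp only [Matrix.mul_zero, add_zero, zero_add, Matrix.mul_neg, Matrix.mul_one, hCP,
          Matrix.neg_mul]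
        rw [hfd]; simp only [Matrix.mul_assoc]; abel
      have : (K * S) * ((Kᵀ * G⁻¹ * K) * (S * Kᵀ)) = G := by
        calc (K * S) * ((Kᵀ * G⁻¹ * K) * (S * Kᵀ))
            = (K * S * Kᵀ) * G⁻¹ * (K * S * Kᵀ) := by simp only [Matrix.mul_assoc]
          _ = G := by rw [hKSK]; simp [hGG]
      calc m = G.rank := by
            rw [Matrix.rank_of_isUnit G ((Matrix.isUnit_iff_isUnit_det _).mpr hGd)]; simp
        _ = ((K * S) * ((Kᵀ * G⁻¹ * K) * (S * Kᵀ))).rank := by rw [this]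
        _ ≤ ((Kᵀ * G⁻¹ * K) * (S * Kᵀ)).rank := Matrix.rank_mul_le_right _ _
        _ ≤ (Kᵀ * G⁻¹ * K).rank := Matrix.rank_mul_le_left _ _

theorem nonsingular_solutions_of_CLMI
    (n m : ℕ) (A : Matrix (Fin n) (Fin n) ℝ) (B : Matrix (Fin n) (Fin m) ℝ)
    (C : Matrix (Fin m) (Fin n) ℝ) (D : Matrix (Fin m) (Fin m) ℝ)
    (hreach : Reachable A B) (hobs : Observable A C) (hap : AllPass A B C D)
    (Q₀ : Matrix (Fin n) (Fin n) ℝ) (hQ₀symm : Q₀.IsSymm) (hQ₀inv : IsUnit Q₀)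
    (hQ₀1 : Aᵀ * Q₀ * A - Q₀ = Cᵀ * C) (hQ₀2 : Cᵀ * D = Aᵀ * Q₀ * B)
    (hQ₀3 : Dᵀ * D - Bᵀ * Q₀ * B = 1) :
    (∀ Δ : Matrix (Fin n) (Fin n) ℝ, Δ.IsSymm → A * Δ * Aᵀ = Δ →
      IsUnit (Q₀⁻¹ + Δ) ∧ ((Q₀⁻¹ + Δ)⁻¹).IsSymm ∧ IsUnit ((Q₀⁻¹ + Δ)⁻¹) ∧
      (Matrix.fromBlocks (Aᵀ * (Q₀⁻¹ + Δ)⁻¹ * A - (Q₀⁻¹ + Δ)⁻¹) (Aᵀ * (Q₀⁻¹ + Δ)⁻¹ * B)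
        (Bᵀ * (Q₀⁻¹ + Δ)⁻¹ * A) (Bᵀ * (Q₀⁻¹ + Δ)⁻¹ * B + 1)).PosSemidef ∧
      (Matrix.fromBlocks (Aᵀ * (Q₀⁻¹ + Δ)⁻¹ * A - (Q₀⁻¹ + Δ)⁻¹) (Aᵀ * (Q₀⁻¹ + Δ)⁻¹ * B)
        (Bᵀ * (Q₀⁻¹ + Δ)⁻¹ * A) (Bᵀ * (Q₀⁻¹ + Δ)⁻¹ * B + 1)).rank = m) ∧
    (∀ Q : Matrix (Fin n) (Fin n) ℝ, Q.IsSymm → IsUnit Q →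
      (Matrix.fromBlocks (Aᵀ * Q * A - Q) (Aᵀ * Q * B)
        (Bᵀ * Q * A) (Bᵀ * Q * B + 1)).PosSemidef →
      (Matrix.fromBlocks (Aᵀ * Q * A - Q) (Aᵀ * Q * B)
        (Bᵀ * Q * A) (Bᵀ * Q * B + 1)).rank = m →
      ∃ Δ : Matrix (Fin n) (Fin n) ℝ, Δ.IsSymm ∧ A * Δ * Aᵀ = Δ ∧ Q = (Q₀⁻¹ + Δ)⁻¹) ∧
    (Unmixed A →
      ∀ Q : Matrix (Fin n) (Fin n) ℝ, Q.IsSymm → IsUnit Q →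
      (Matrix.fromBlocks (Aᵀ * Q * A - Q) (Aᵀ * Q * B)
        (Bᵀ * Q * A) (Bᵀ * Q * B + 1)).PosSemidef →
      (Matrix.fromBlocks (Aᵀ * Q * A - Q) (Aᵀ * Q * B)
        (Bᵀ * Q * A) (Bᵀ * Q * B + 1)).rank = m →
      Q = Q₀) := by
  have hdet : IsUnit Q₀.det := (Matrix.isUnit_iff_isUnit_det _).mp hQ₀inv
  have hPQ : Q₀⁻¹ * Q₀ = 1 := Matrix.nonsing_inv_mul _ hdet
  have hPs : (Q₀⁻¹)ᵀ = Q₀⁻¹ := by rw [Matrix.transpose_nonsing_inv, hQ₀symm]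
  have hb : ∀ Q : Matrix (Fin n) (Fin n) ℝ, Q.IsSymm → IsUnit Q →
      (Matrix.fromBlocks (Aᵀ * Q * A - Q) (Aᵀ * Q * B)
        (Bᵀ * Q * A) (Bᵀ * Q * B + 1)).PosSemidef →
      (Matrix.fromBlocks (Aᵀ * Q * A - Q) (Aᵀ * Q * B)
        (Bᵀ * Q * A) (Bᵀ * Q * B + 1)).rank = m →
      ∃ Δ : Matrix (Fin n) (Fin n) ℝ, Δ.IsSymm ∧ A * Δ * Aᵀ = Δ ∧ Q = (Q₀⁻¹ + Δ)⁻¹ := by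
    intro Q hQs hQu _ hQr
    have hst := stein_of_rank A B Q hQu hQr
    obtain ⟨k1, -, -⟩ := dual_first hQ₀symm hPQ hQ₀1 hQ₀2 hQ₀3
    refine ⟨Q⁻¹ - Q₀⁻¹, ?_, ?_, ?_⟩
    · rw [Matrix.IsSymm, Matrix.transpose_sub, hPs, Matrix.transpose_nonsing_inv, hQs]
    · rw [Matrix.mul_sub, Matrix.sub_mul]
      conv_rhs => rw [← hst, ← k1]
      abel
    · rw [add_sub_cancel,
        Matrix.nonsing_inv_nonsing_inv _ ((Matrix.isUnit_iff_isUnit_det _).mp hQu)]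
  refine ⟨?_, hb, ?_⟩
  · intro Δ hΔs hΔ
    obtain ⟨hu, hpsd, hrank⟩ :=
      part_a hreach hQ₀symm hPs hPQ hQ₀1 hQ₀2 hQ₀3 Δ hΔs hΔ
    refine ⟨hu, ?_, ?_, hpsd, hrank⟩
    · rw [Matrix.IsSymm, Matrix.transpose_nonsing_inv, Matrix.transpose_add, hPs, hΔs]
    · exact Matrix.isUnit_nonsing_inv_iff.mpr hu
  · intro hunm Q hQs hQu hpsd hrank
    obtain ⟨Δ, -, hΔ, hQ⟩ := hb Q hQs hQu hpsd hrank
    rw [hQ, stein_unmixed hunm Δ hΔ, add_zero, Matrix.nonsing_inv_nonsing_inv _ hdet]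
end
end
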